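/- arXiv:2411.17613 — 4 statements merged into one kernel-verified Lean document; each statement's English description precedes it below -/
import Mathlib

section
/- Let n ≥ 1 and let σ be a permutation of [n] = {1,…,n} with σ(1) = 1. For each d ≥ 1 let λ_d denote the number of cycles of σ of length d (fixed points counting as cycles of length 1), and set μ_d = Σ_{e | d, e < d} e·λ_e. Then the number of labeled trees on [n] (rooted at 1) that are σ-invariant equals λ_1^{λ_1−2} · ∏_{d ≥ 2, λ_d ≠ 0} (d·λ_d + μ_d)^{λ_d−1} · μ_d, where the exponent λ_1−2 is truncated subtraction on natural numbers (the factor equals 1 when λ_1 ≤ 2; note λ_1 ≥ 1 since σ(1)=1). -/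
/-- The number of cycles of length `d` of a permutation of `Fin n`
(fixed points count as cycles of length 1). -/
noncomputable def cycleCount {n : ℕ} (σ : Equiv.Perm (Fin n)) (d : ℕ) : ℕ :=
  (Finset.univ.filter fun i : Fin n => Function.minimalPeriod (⇑σ) i = d).card / d

/-- `μ_d = Σ_{e ∣ d, e < d} e·λ_e`. -/
noncomputable def muOf {n : ℕ} (σ : Equiv.Perm (Fin n)) (d : ℕ) : ℕ :=
  ∑ e ∈ d.properDivisors, e * cycleCount σ e

/-!
Rooting a tree at `r` identifies it with its parent map, and the tree is invariant under `σ`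
exactly when its parent map commutes with `σ`. A map commuting with `σ` is determined by its values
at one point of each cycle, where the value may be any point whose period divides the length of the
cycle; it is a parent map when the induced arrows between cycles form a forest leading to the cycle
of `r`. Lengths never increase along the arrows, so acyclicity can be tested on the cycles of each
length `d` separately, and the count is a product over `d`.

For one factor, colour a finite set `X` by classes, let `A` consist of `k` of the classes, and
choose a point of `X` for each class in `A`. Exactly the fraction `m / |X|` of the `|X| ^ k` choices
is acyclic, where `m` counts the points outside the classes in `A`: fixing the point chosen for one
class contracts that class into another one, which gives an induction on `k`. Here `X` consists of
the `d * λ_d + μ_d` points whose period divides `d`. For `d ≥ 2` we get `k = λ_d` and `m = μ_d`,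
while for `d = 1` only the fixed point `r` lies outside `A`, so `k = λ_1 - 1` and `m = 1`.
-/

open Function

/-! ### Forests on classes -/

section Forests

variable {X Q ι : Type*}

/-- Let `c` assign to each point its class, and let `g` choose a point for each class in `A`. Draw
an arrow from each `s ∈ A` to the class of `g s`; then `g` is a forest if following arrows always
leaves `A`. This is encoded as well-foundedness of the relation "`t` is the target of the arrow
from `s`" on `A`. -/
def IsForest (c : X → Q) {A : Finset Q} (g : A → X) : Prop :=
  WellFounded fun t s : A => c (g s) = t

namespace IsForest

variable {c : X → Q} {A B : Finset Q}

theorem restrict {g : A → X} (hg : IsForest c g) (hBA : B ⊆ A) :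
    IsForest c fun q : B => g ⟨q, hBA q.2⟩ :=
  Subrelation.wf (fun h => h) (InvImage.wf (fun q : B => (⟨q, hBA q.2⟩ : A)) hg)

variable [DecidableEq Q] {a : Q} {g : ↥(insert a A) → X}

theorem apply_ne (hg : IsForest c g) : c (g ⟨a, A.mem_insert_self a⟩) ≠ a :=
  fun h => hg.irrefl.irrefl ⟨a, A.mem_insert_self a⟩ h

theorem contract (hg : IsForest c g) :
    IsForest (update id a (c (g ⟨a, A.mem_insert_self a⟩)) ∘ c)
      fun q : A => g ⟨q, A.mem_insert_of_mem q.2⟩ := by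
  refine Subrelation.wf (fun {t s} hts => ?_)
    (InvImage.wf (fun q : A => ⟨q, A.mem_insert_of_mem q.2⟩) hg.transGen)
  by_cases hs : c (g ⟨s, A.mem_insert_of_mem s.2⟩) = a
  · rw [comp_apply, hs, update_self] at hts
    exact Relation.TransGen.head (b := ⟨a, A.mem_insert_self a⟩) hts (.single hs)
  · rw [comp_apply, update_of_ne hs] at hts
    exact Relation.TransGen.single hts

theorem of_contract (ha : c (g ⟨a, A.mem_insert_self a⟩) ≠ a)
    (hg : IsForest (update id a (c (g ⟨a, A.mem_insert_self a⟩)) ∘ c)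
      fun q : A => g ⟨q, A.mem_insert_of_mem q.2⟩) :
    IsForest c g := by
  have acc_of_mem (s : A) :
      Acc (fun t s => c (g s) = t) ⟨s, A.mem_insert_of_mem s.2⟩ := by
    induction s using hg.induction with | _ s ih
    refine ⟨_, fun ⟨t, ht⟩ hts => ?_⟩
    obtain rfl | hta := eq_or_ne t a
    · refine ⟨_, fun ⟨u, hu⟩ hut => ?_⟩
      have hua : u ≠ t := fun h => ha (hut.trans h)
      exact ih ⟨u, Finset.mem_of_mem_insert_of_ne hu hua⟩ (by simp [hts, hut])
    · exact ih ⟨t, Finset.mem_of_mem_insert_of_ne ht hta⟩ (by simp [hts, hta])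
  refine ⟨fun ⟨s, hs⟩ => ?_⟩
  obtain rfl | hsa := eq_or_ne s a
  · refine ⟨_, fun ⟨t, ht⟩ hts => ?_⟩
    have hta : t ≠ s := fun h => ha (hts.trans h)
    exact acc_of_mem ⟨t, Finset.mem_of_mem_insert_of_ne ht hta⟩
  · exact acc_of_mem ⟨s, Finset.mem_of_mem_insert_of_ne hs hsa⟩

end IsForest

theorem isForest_insert_iff [DecidableEq Q] {c : X → Q} {A : Finset Q} {a : Q}
    {g : ↥(insert a A) → X} :
    IsForest c g ↔ c (g ⟨a, A.mem_insert_self a⟩) ≠ a ∧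
      IsForest (update id a (c (g ⟨a, A.mem_insert_self a⟩)) ∘ c)
        fun q : A => g ⟨q, A.mem_insert_of_mem q.2⟩ :=
  ⟨fun hg => ⟨hg.apply_ne, hg.contract⟩, fun hg => .of_contract hg.1 hg.2⟩

theorem card_isForest_insert [Fintype X] [DecidableEq Q] (c : X → Q) {A : Finset Q} {a : Q}
    (ha : a ∉ A) :
    Nat.card {g : ↥(insert a A) → X // IsForest c g} =
      ∑ x : {x // c x ≠ a}, Nat.card {g : A → X // IsForest (update id a (c x) ∘ c) g} := by
  rw [← Nat.card_sigma]
  let e : (↥(insert a A) → X) ≃ X × (A → X) :=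
    ((Finset.subtypeInsertEquivOption ha).arrowCongr (.refl X)).trans .piOptionEquivProd
  calc Nat.card {g : ↥(insert a A) → X // IsForest c g}
    _ = Nat.card {p : X × (A → X) // c p.1 ≠ a ∧ IsForest (update id a (c p.1) ∘ c) p.2} :=
      Nat.card_congr (e.subtypeEquiv fun g => isForest_insert_iff)
    _ = _ := Nat.card_congr
      { toFun p := ⟨⟨p.1.1, p.2.1⟩, p.1.2, p.2.2⟩
        invFun p := ⟨(p.1, p.2), p.1.2, p.2.2⟩ }

theorem sum_card_contract_notMem [Fintype X] [DecidableEq Q] (c : X → Q) (A : Finset Q) (a : Q) :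
    ∑ x : {x // c x ≠ a}, Nat.card {y // update id a (c x) (c y) ∉ A} =
      Nat.card X * Nat.card {y // c y ∉ insert a A} := by
  calc ∑ x : {x // c x ≠ a}, Nat.card {y // update id a (c x) (c y) ∉ A}
    _ = Nat.card {p : X × X // c p.1 ≠ a ∧ update id a (c p.1) (c p.2) ∉ A} := by
      rw [← Nat.card_sigma]
      exact Nat.card_congr
        { toFun p := ⟨(p.1, p.2), p.1.2, p.2.2⟩
          invFun p := ⟨⟨p.1.1, p.2.1⟩, p.1.2, p.2.2⟩ }
    _ = Nat.card {p : X × X // c p.2 ∉ insert a A} := Nat.card_congr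
      { toFun p := ⟨if c p.1.2 = a then p.1.swap else p.1, by grind [update_apply]⟩
        invFun p := ⟨if c p.1.1 = a then p.1.swap else p.1, by grind [update_apply]⟩
        left_inv := by grind [LeftInverse]
        right_inv := by grind [Function.RightInverse, LeftInverse] }
    _ = Nat.card X * Nat.card {y // c y ∉ insert a A} := by
      rw [← Nat.card_prod]
      exact Nat.card_congr
        { toFun p := (p.1.1, ⟨p.1.2, p.2⟩)
          invFun p := ⟨(p.1, p.2), p.2.2⟩ }

theorem card_mul_card_isForest [Finite X] (c : X → Q) (A : Finset Q) :
    Nat.card X * Nat.card {g : A → X // IsForest c g} =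
      Nat.card {x // c x ∉ A} * Nat.card X ^ A.card := by
  classical
  have := Fintype.ofFinite X
  induction A using Finset.induction generalizing c with
  | empty =>
    have : Unique {g : (∅ : Finset Q) → X // IsForest c g} :=
      { default := ⟨isEmptyElim, wellFounded_of_isEmpty _⟩
        uniq g := Subsingleton.elim _ _ }
    simp
  | insert a A ha ih =>
    rw [card_isForest_insert c ha, Finset.mul_sum, Finset.sum_congr rfl fun x _ => ih _,
      ← Finset.sum_mul]
    simp only [comp_apply]
    rw [sum_card_contract_notMem, Finset.card_insert_of_notMem ha, pow_succ]
    ring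

theorem card_mul_card_forall_and_isForest [Finite X] (p : X → Prop) (c : X → Q) (A : Finset Q) :
    Nat.card {x // p x} * Nat.card {g : A → X // (∀ q, p (g q)) ∧ IsForest c g} =
      Nat.card {x // p x ∧ c x ∉ A} * Nat.card {x // p x} ^ A.card := by
  convert card_mul_card_isForest (fun x : {x // p x} => c x) A using 2
  · exact Nat.card_congr
      { toFun g := ⟨fun q => ⟨g.1 q, g.2.1 q⟩, g.2.2⟩
        invFun g := ⟨fun q => g.1 q, fun q => (g.1 q).2, g.2⟩ }
  · exact Nat.card_congr (Equiv.subtypeSubtypeEquivSubtypeInter p fun x => c x ∉ A).symm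

theorem isForest_iff_forall_restrict [PartialOrder ι] [WellFoundedLT ι] [DecidableEq ι]
    {c : X → Q} {A : Finset Q} {g : A → X} (L : Q → ι)
    (hL : ∀ s t : A, c (g s) = t → L t ≤ L s) :
    IsForest c g ↔
      ∀ d, IsForest c fun q : {q ∈ A | L q = d} => g ⟨q, A.filter_subset _ q.2⟩ := by
  refine ⟨fun hg d => hg.restrict _, fun hg => ?_⟩
  have hfib (d : ι) : ((fun q : A => L q) ⁻¹' {d}).WellFoundedOn fun t s : A => c (g s) = t :=
    InvImage.wf (fun q : (fun q : A => L q) ⁻¹' {d} =>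
      (⟨q, Finset.mem_filter.2 ⟨q.1.2, q.2⟩⟩ : ↥{q ∈ A | L q = d})) (hg d)
  refine (WellFounded.prod_lex_of_wellFoundedOn_fiber (f := fun q : A => L q) (g := id)
    (rβ := fun t s : A => c (g s) = t) wellFounded_lt.onFun hfib).mono fun t s hts => ?_
  exact Prod.lex_def.2 ((hL s t hts).lt_or_eq.imp_right fun h => ⟨h, hts⟩)

theorem card_isForest_eq_prod [Finite X] [PartialOrder ι] [WellFoundedLT ι] [DecidableEq ι]
    (c : X → Q) (A : Finset Q) (P : Q → X → Prop) (L : Q → ι)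
    (hL : ∀ q ∈ A, ∀ x, P q x → c x ∈ A → L (c x) ≤ L q) (D : Finset ι) (hD : ∀ q ∈ A, L q ∈ D) :
    Nat.card {g : A → X // (∀ q : A, P q (g q)) ∧ IsForest c g} =
      ∏ d ∈ D, Nat.card {g : ↥{q ∈ A | L q = d} → X //
        (∀ q : ↥{q ∈ A | L q = d}, P q (g q)) ∧ IsForest c g} := by
  rw [← Finset.prod_coe_sort, ← Nat.card_pi]
  refine Nat.card_congr (Equiv.ofBijective (fun g d => ⟨fun q => g.1 ⟨q, A.filter_subset _ q.2⟩,
    fun q => g.2.1 ⟨q, A.filter_subset _ q.2⟩, g.2.2.restrict _⟩) ⟨fun g g' h => ?_, fun h => ?_⟩)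
  · ext q
    exact congrFun (congrArg Subtype.val (congrFun h ⟨L q, hD q q.2⟩)) ⟨q, by simp⟩
  · let g (q : A) : X := (h ⟨L q, hD q q.2⟩).1 ⟨q, by simp⟩
    have hg (d : D) : (fun q : ↥{q ∈ A | L q = d} => g ⟨q, A.filter_subset _ q.2⟩) = (h d).1 := by
      obtain ⟨d, hd⟩ := d
      ext ⟨q, hq⟩
      obtain rfl := (Finset.mem_filter.1 hq).2
      rfl
    have hgP (q : A) : P q (g q) := (h ⟨L q, hD q q.2⟩).2.1 ⟨q, by simp⟩
    refine ⟨⟨g, hgP, (isForest_iff_forall_restrict L ?_).2 fun d => ?_⟩,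
      funext fun d => Subtype.ext (hg d)⟩
    · intro s t hst
      rw [← hst]
      exact hL s s.2 _ (hgP s) (hst ▸ t.2)
    · by_cases hd : d ∈ D
      · rw [hg ⟨d, hd⟩]
        exact (h ⟨d, hd⟩).2.2
      · have : IsEmpty ↥{q ∈ A | L q = d} := ⟨fun q => by grind⟩
        exact wellFounded_of_isEmpty _

end Forests

/-! ### Trees as parent maps -/

section ParentMaps

variable {V : Type*}

/-- `f` sends each vertex to its parent in a tree rooted at `r`, the root being its own parent:
following `f` from any vertex reaches `r`. -/
structure IsParentMap (r : V) (f : V → V) : Prop where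
  map_root : f r = r
  wf : WellFounded fun w v : {v // v ≠ r} => f v = w

/-- The graph joining each vertex to its image under `f`, without loops. -/
def parentGraph (f : V → V) : SimpleGraph V :=
  SimpleGraph.fromRel fun v w => f v = w

theorem parentGraph_adj {f : V → V} {v w : V} :
    (parentGraph f).Adj v w ↔ v ≠ w ∧ (f v = w ∨ f w = v) :=
  SimpleGraph.fromRel_adj _ v w

theorem comap_parentGraph (σ : Equiv.Perm V) (f : V → V) :
    (parentGraph f).comap σ = parentGraph (σ.symm ∘ f ∘ σ) := by
  ext v w
  simp [parentGraph_adj, Equiv.symm_apply_eq]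

namespace IsParentMap

variable {r : V} {f g : V → V}

protected theorem induction (hf : IsParentMap r f) {P : V → Prop} (root : P r)
    (step : ∀ v ≠ r, P (f v) → P v) (v : V) : P v := by
  have of_ne (v : {v // v ≠ r}) : P v := by
    induction v using hf.wf.induction with | _ v ih
    refine step v v.2 ?_
    obtain h | h := eq_or_ne (f v) r
    · rwa [h]
    · exact ih ⟨f v, h⟩ rfl
  obtain rfl | h := eq_or_ne v r
  exacts [root, of_ne ⟨v, h⟩]

theorem apply_ne (hf : IsParentMap r f) {v : V} (hv : v ≠ r) : f v ≠ v :=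
  fun h => hf.wf.irrefl.irrefl ⟨v, hv⟩ h

theorem adj_apply (hf : IsParentMap r f) {v : V} (hv : v ≠ r) : (parentGraph f).Adj v (f v) :=
  parentGraph_adj.2 ⟨(hf.apply_ne hv).symm, .inl rfl⟩

theorem connected (hf : IsParentMap r f) : (parentGraph f).Connected := by
  have reachable_root (v : V) : (parentGraph f).Reachable v r :=
    hf.induction .rfl (fun v hv h => (hf.adj_apply hv).reachable.trans h) v
  exact { preconnected v w := (reachable_root v).trans (reachable_root w).symm, nonempty := ⟨r⟩ }

theorem exists_ne_root_of_adj (hf : IsParentMap r f) {v w : V} (h : (parentGraph f).Adj v w) :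
    ∃ u ≠ r, s(u, f u) = s(v, w) := by
  obtain ⟨hne, rfl | rfl⟩ := parentGraph_adj.1 h
  · exact ⟨v, fun hv => hne (by rw [hv, hf.map_root]), rfl⟩
  · exact ⟨w, fun hw => hne (by rw [hw, hf.map_root]), Sym2.eq_swap⟩

theorem isTree [Finite V] (hf : IsParentMap r f) : (parentGraph f).IsTree := by
  let edge (v : {v // v ≠ r}) : (parentGraph f).edgeSet := ⟨s(v.1, f v), hf.adj_apply v.2⟩
  have edge_surjective : Surjective edge := by
    rintro ⟨e, he⟩
    induction e with | _ v w
    obtain ⟨u, hu, h⟩ := hf.exists_ne_root_of_adj he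
    exact ⟨⟨u, hu⟩, Subtype.ext h⟩
  refine SimpleGraph.isTree_iff_connected_and_card.2 ⟨hf.connected, le_antisymm ?_
    hf.connected.card_vert_le_card_edgeSet_add_one⟩
  classical
  calc Nat.card (parentGraph f).edgeSet + 1
    _ ≤ Nat.card {v // v ≠ r} + 1 :=
      Nat.add_le_add_right (Nat.card_le_card_of_surjective edge edge_surjective) 1
    _ = Nat.card V := by
      rw [← Finite.card_option, Nat.card_congr (Equiv.optionSubtypeNe r)]

theorem eq_of_parentGraph_eq (hf : IsParentMap r f) (hg : IsParentMap r g)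
    (h : parentGraph f = parentGraph g) : f = g := by
  funext v
  induction v using hf.induction with
  | root => rw [hf.map_root, hg.map_root]
  | step v hv ih =>
    obtain ⟨-, hgv | hgfv⟩ := parentGraph_adj.1 (h ▸ hf.adj_apply hv)
    · exact hgv.symm
    · have hfv : f v ≠ r := fun hr => hv (by rw [← hgfv, hr, hg.map_root])
      exact absurd (ih.trans hgfv) (hf.wf.asymmetric (a := ⟨f v, hfv⟩) (b := ⟨v, hv⟩) rfl)

theorem conj (hf : IsParentMap r f) {σ : Equiv.Perm V} (hσ : σ r = r) :
    IsParentMap r (σ.symm ∘ f ∘ σ) where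
  map_root := by simp [hσ, hf.map_root, Equiv.symm_apply_eq]
  wf := by
    let act (v : {v // v ≠ r}) : {v // v ≠ r} :=
      ⟨σ v, fun h => v.2 (σ.injective (h.trans hσ.symm))⟩
    exact (InvImage.wf act hf.wf).mono fun w v h => σ.symm_apply_eq.1 h

theorem commute_iff (hf : IsParentMap r f) {σ : Equiv.Perm V} (hσ : σ r = r) :
    Function.Commute f σ ↔
      ∀ v w, (parentGraph f).Adj v w ↔ (parentGraph f).Adj (σ v) (σ w) := by
  calc Function.Commute f σ
    _ ↔ f = σ.symm ∘ f ∘ σ := by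
      simp [Function.Commute, Semiconj, funext_iff, Equiv.eq_symm_apply, eq_comm]
    _ ↔ parentGraph f = (parentGraph f).comap σ := by
      rw [comap_parentGraph]
      exact ⟨congrArg _, hf.eq_of_parentGraph_eq (hf.conj hσ)⟩
    _ ↔ ∀ v w, (parentGraph f).Adj v w ↔ (parentGraph f).Adj (σ v) (σ w) := by
      simp [SimpleGraph.ext_iff, funext_iff]

end IsParentMap

theorem exists_adj_dist_lt {G : SimpleGraph V} (hG : G.Connected) {v r : V} (hv : v ≠ r) :
    ∃ w, G.Adj v w ∧ G.dist w r < G.dist v r := by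
  obtain ⟨p, hp⟩ := hG.exists_walk_length_eq_dist v r
  cases p with
  | nil => exact absurd rfl hv
  | cons h q => exact ⟨_, h, (SimpleGraph.dist_le q).trans_lt (by simp [← hp])⟩

theorem exists_isParentMap_parentGraph_eq [Finite V] (r : V) {T : SimpleGraph V} (hT : T.IsTree) :
    ∃ f, IsParentMap r f ∧ parentGraph f = T := by
  classical
  choose! f hadj hdist using fun v (hv : v ≠ r) => exists_adj_dist_lt hT.connected hv
  have hf : IsParentMap r (update f r r) :=
    { map_root := update_self ..
      wf := (InvImage.wf (fun v : {v // v ≠ r} => T.dist v r) wellFounded_lt).mono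
        fun w v h => by
          rw [update_of_ne v.2] at h
          change T.dist w r < T.dist v r
          exact h ▸ hdist v v.2 }
  have hle : parentGraph (update f r r) ≤ T := by
    intro v w h
    obtain ⟨u, hu, he⟩ := hf.exists_ne_root_of_adj h
    rw [update_of_ne hu] at he
    rw [← SimpleGraph.mem_edgeSet, ← he]
    exact hadj u hu
  exact ⟨_, hf, hle.antisymm
    ((SimpleGraph.isTree_iff_minimal_connected.1 hT).2 hf.connected hle)⟩

theorem card_invariant_trees_eq_card_commute [Finite V] {r : V} {σ : Equiv.Perm V} (hσ : σ r = r) :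
    Nat.card {T : SimpleGraph V // T.IsTree ∧ ∀ v w, T.Adj v w ↔ T.Adj (σ v) (σ w)} =
      Nat.card {f : V → V // IsParentMap r f ∧ Function.Commute f σ} := by
  refine (Nat.card_congr (Equiv.ofBijective
    (fun f => ⟨parentGraph f.1, f.2.1.isTree, (f.2.1.commute_iff hσ).1 f.2.2⟩) ⟨?_, ?_⟩)).symm
  · exact fun f g h => Subtype.ext (f.2.1.eq_of_parentGraph_eq g.2.1 (congrArg Subtype.val h))
  · rintro ⟨T, hT, hσT⟩
    obtain ⟨f, hf, rfl⟩ := exists_isParentMap_parentGraph_eq r hT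
    exact ⟨⟨f, hf, (hf.commute_iff hσ).2 hσT⟩, rfl⟩

end ParentMaps

/-! ### Cycles and equivariant maps -/

section Cycles

variable {V W : Type*} {σ : Equiv.Perm V} {τ : Equiv.Perm W}

theorem semiconj_zpow {f : V → W} (h : Semiconj f σ τ) (i : ℤ) :
    Semiconj f ⇑(σ ^ i) ⇑(τ ^ i) := by
  have semiconj_pow (n : ℕ) : Semiconj f ⇑(σ ^ n) ⇑(τ ^ n) := by
    simpa only [Equiv.Perm.coe_pow] using h.iterate_right n
  cases i with
  | ofNat n => exact semiconj_pow n
  | negSucc n =>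
    rw [zpow_negSucc, zpow_negSucc]
    exact (semiconj_pow _).inverses_right (σ ^ _).right_inv (τ ^ _).left_inv

theorem minimalPeriod_apply_dvd_of_semiconj {f : V → W} {φ : V → V} {ψ : W → W}
    (h : Semiconj f φ ψ) (v : V) : minimalPeriod ψ (f v) ∣ minimalPeriod φ v :=
  ((isPeriodicPt_minimalPeriod φ v).map h).minimalPeriod_dvd

theorem minimalPeriod_eq_of_sameCycle {v w : V} (h : σ.SameCycle v w) :
    minimalPeriod σ v = minimalPeriod σ w := by
  have dvd {v w : V} : σ.SameCycle v w → minimalPeriod σ w ∣ minimalPeriod σ v := by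
    rintro ⟨i, rfl⟩
    exact minimalPeriod_apply_dvd_of_semiconj (f := ⇑(σ ^ i))
      (fun v => Equiv.congr_fun ((Commute.refl σ).zpow_left i) v) v
  exact (dvd h.symm).antisymm (dvd h)

theorem zpow_apply_eq_zpow_apply_iff {v : V} {i j : ℤ} :
    (σ ^ i) v = (σ ^ j) v ↔ (minimalPeriod σ v : ℤ) ∣ i - j := by
  calc (σ ^ i) v = (σ ^ j) v
    _ ↔ (σ ^ (i - j)) v = v := by
      rw [sub_eq_neg_add, zpow_add, Equiv.Perm.mul_apply, zpow_neg, Equiv.Perm.inv_eq_iff_eq,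
        eq_comm]
    _ ↔ (minimalPeriod σ v : ℤ) ∣ i - j :=
      MulAction.zpow_smul_eq_iff_minimalPeriod_dvd (a := σ) (b := v)

/-- The cycles of a permutation, with fixed points as cycles of length one. An infinite orbit counts
as a cycle, of length zero. -/
abbrev PermCycle (σ : Equiv.Perm V) : Type _ :=
  Quotient (Equiv.Perm.SameCycle.setoid σ)

namespace PermCycle

/-- The cycle of `σ` through `v`. -/
def of (σ : Equiv.Perm V) (v : V) : PermCycle σ :=
  Quotient.mk _ v

/-- The length of a cycle: the common period of its points, zero for an infinite orbit. -/
noncomputable def length : PermCycle σ → ℕ :=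
  Quotient.lift (minimalPeriod σ) fun _ _ => minimalPeriod_eq_of_sameCycle

theorem of_eq_of_iff {v w : V} : of σ v = of σ w ↔ σ.SameCycle v w :=
  Quotient.eq

theorem of_out (q : PermCycle σ) : of σ q.out = q :=
  q.out_eq

theorem length_of (v : V) : (of σ v).length = minimalPeriod σ v :=
  rfl

theorem length_of_eq_one {v : V} (hv : σ v = v) : (of σ v).length = 1 :=
  minimalPeriod_eq_one_iff_isFixedPt.2 hv

theorem minimalPeriod_out (q : PermCycle σ) : minimalPeriod σ q.out = q.length := by
  rw [← length_of, of_out]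

theorem of_zpow_apply (i : ℤ) (v : V) : of σ ((σ ^ i) v) = of σ v :=
  of_eq_of_iff.2 (Equiv.Perm.sameCycle_zpow_left.2 (.refl σ v))

theorem exists_zpow_out_eq (v : V) : ∃ i : ℤ, (σ ^ i) (of σ v).out = v :=
  of_eq_of_iff.1 (of_out _)

theorem of_eq_of_iff_of_fixed {r : V} (hσ : σ r = r) {v : V} : of σ v = of σ r ↔ v = r := by
  rw [of_eq_of_iff, Equiv.Perm.sameCycle_comm]
  refine ⟨fun ⟨i, hi⟩ => ?_, fun h => h ▸ .refl σ v⟩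
  rw [← hi, Equiv.Perm.zpow_apply_eq_self_of_apply_eq_self hσ]

theorem length_pos [Finite V] (q : PermCycle σ) : 0 < q.length := by
  rw [← minimalPeriod_out]
  exact minimalPeriod_pos_of_mem_periodicPts (σ.injective.mem_periodicPts _)

theorem length_le_card [Finite V] (q : PermCycle σ) : q.length ≤ Nat.card V := by
  have := Fintype.ofFinite V
  rw [← minimalPeriod_out, Nat.card_eq_fintype_card]
  exact minimalPeriod_le_card

theorem card_points (q : PermCycle σ) : Nat.card {v // of σ v = q} = q.length := by
  have mem_orbit_iff (v : V) : of σ v = q ↔ v ∈ MulAction.orbit (Subgroup.zpowers σ) q.out := by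
    conv_lhs => rw [← of_out q, of_eq_of_iff, Equiv.Perm.sameCycle_comm]
    simp [Equiv.Perm.SameCycle, MulAction.mem_orbit_iff, Subgroup.exists_zpowers, Subgroup.smul_def]
  rw [Nat.card_congr (Equiv.subtypeEquivRight mem_orbit_iff),
    Nat.card_congr (MulAction.orbitZPowersEquiv σ q.out), Nat.card_zmod]
  exact minimalPeriod_out q

end PermCycle

open PermCycle

theorem of_apply_out {f : V → W} (hf : Semiconj f σ τ) (v : V) :
    of τ (f (of σ v).out) = of τ (f v) := by
  obtain ⟨i, hi⟩ := exists_zpow_out_eq (σ := σ) v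
  conv_rhs => rw [← hi, semiconj_zpow hf i, of_zpow_apply]

theorem eq_of_semiconj_of_out_eq {f g : V → W} (hf : Semiconj f σ τ) (hg : Semiconj g σ τ)
    (h : ∀ q : PermCycle σ, f q.out = g q.out) : f = g := by
  funext v
  obtain ⟨i, hi⟩ := exists_zpow_out_eq (σ := σ) v
  rw [← hi, semiconj_zpow hf i, semiconj_zpow hg i, h]

theorem exists_semiconj_out_eq (g : PermCycle σ → W)
    (hg : ∀ q, minimalPeriod τ (g q) ∣ q.length) :
    ∃ f : V → W, Semiconj f σ τ ∧ ∀ q : PermCycle σ, f q.out = g q := by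
  choose i hi using exists_zpow_out_eq (σ := σ)
  let f (v : V) : W := (τ ^ i v) (g (of σ v))
  have f_zpow_out (q : PermCycle σ) (j : ℤ) : f ((σ ^ j) q.out) = (τ ^ j) (g q) := by
    have h := hi ((σ ^ j) q.out)
    have hq : of σ ((σ ^ j) q.out) = q := by rw [of_zpow_apply, of_out]
    rw [hq, zpow_apply_eq_zpow_apply_iff, minimalPeriod_out] at h
    simp only [f, hq]
    exact zpow_apply_eq_zpow_apply_iff.2 ((Int.natCast_dvd_natCast.2 (hg q)).trans h)
  refine ⟨f, fun v => ?_, fun q => f_zpow_out q 0⟩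
  calc f (σ v)
    _ = f ((σ ^ (1 + i v)) (of σ v).out) := by
      rw [zpow_one_add, Equiv.Perm.mul_apply, hi]
    _ = τ (f v) := by rw [f_zpow_out, zpow_one_add, Equiv.Perm.mul_apply]

/-- The number `λ_d` of cycles of length `d`. -/
noncomputable def numCycles (σ : Equiv.Perm V) (d : ℕ) : ℕ :=
  Nat.card {q : PermCycle σ // q.length = d}

theorem card_minimalPeriod_eq [Finite V] (d : ℕ) :
    Nat.card {v // minimalPeriod σ v = d} = d * numCycles σ d := by
  have := Fintype.ofFinite {q : PermCycle σ // q.length = d}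
  calc Nat.card {v // minimalPeriod σ v = d}
    _ = Nat.card (Σ q : {q : PermCycle σ // q.length = d}, {v // of σ v = q}) :=
      Nat.card_congr (Equiv.sigmaSubtypeFiberEquivSubtype (of σ) (q := fun q => q.length = d)
        fun _ => Iff.rfl).symm
    _ = ∑ _q : {q : PermCycle σ // q.length = d}, d := by
      rw [Nat.card_sigma]
      exact Finset.sum_congr rfl fun q _ => (card_points q.1).trans q.2
    _ = d * numCycles σ d := by
      rw [Finset.sum_const, smul_eq_mul, mul_comm, Finset.card_univ, numCycles,
        Nat.card_eq_fintype_card]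

theorem card_minimalPeriod_mem [Finite V] (D : Finset ℕ) :
    Nat.card {v // minimalPeriod σ v ∈ D} = ∑ d ∈ D, d * numCycles σ d := by
  calc Nat.card {v // minimalPeriod σ v ∈ D}
    _ = Nat.card (Σ d : D, {v // minimalPeriod σ v = d}) :=
      Nat.card_congr (Equiv.sigmaSubtypeFiberEquivSubtype (minimalPeriod σ) fun _ => Iff.rfl).symm
    _ = ∑ d : D, d * numCycles σ d := by
      simp_rw [Nat.card_sigma, card_minimalPeriod_eq]
    _ = ∑ d ∈ D, d * numCycles σ d := Finset.sum_coe_sort D fun d => d * numCycles σ d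

end Cycles

/-! ### Equivariant parent maps as forests of cycles -/

section EquivariantParentMaps

open PermCycle

variable {V : Type*} {r : V} {σ : Equiv.Perm V} {A : Finset (PermCycle σ)}

theorem isParentMap_iff_isForest_of_commute (hσ : σ r = r) (hA : ∀ q, q ∈ A ↔ q ≠ of σ r)
    {f : V → V} (hf : Function.Commute f σ) :
    IsParentMap r f ↔ f r = r ∧ IsForest (of σ) fun q : A => f q.1.out := by
  have of_mem_iff (v : V) : of σ v ∈ A ↔ v ≠ r := by
    rw [hA, Ne, of_eq_of_iff_of_fixed hσ]
  refine ⟨fun h => ⟨h.map_root, ?_⟩, fun h => ⟨h.1, ?_⟩⟩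
  · have acc_of (v : V) : ∀ hv : of σ v ∈ A,
        Acc (fun t q : A => of σ (f q.1.out) = t) ⟨of σ v, hv⟩ := by
      induction v using h.induction with
      | root => exact fun hr => absurd rfl ((of_mem_iff r).1 hr)
      | step v _ ih =>
        refine fun hv => ⟨_, fun ⟨t, ht⟩ htv => ?_⟩
        obtain rfl : of σ (f v) = t := (of_apply_out hf v).symm.trans htv
        exact ih ht
    exact ⟨fun ⟨q, hq⟩ => by simpa only [of_out] using acc_of q.out (by rwa [of_out])⟩
  · let cycle (v : {v // v ≠ r}) : A := ⟨of σ v, (of_mem_iff v).2 v.2⟩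
    exact (InvImage.wf cycle h.2).mono fun w v hvw =>
      (of_apply_out hf v.1).trans (congrArg (of σ) hvw)

theorem card_commute_eq_card_isForest (hσ : σ r = r) (hA : ∀ q, q ∈ A ↔ q ≠ of σ r) :
    Nat.card {f : V → V // IsParentMap r f ∧ Function.Commute f σ} =
      Nat.card {g : A → V //
        (∀ q : A, minimalPeriod σ (g q) ∣ q.1.length) ∧ IsForest (of σ) g} := by
  have eq_root_of_notMem {q : PermCycle σ} (hq : q ∉ A) : q.out = r := by
    rw [← of_eq_of_iff_of_fixed hσ, of_out]
    exact not_not.1 ((hA q).not.1 hq)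
  refine Nat.card_congr (Equiv.ofBijective (fun f => ⟨fun q : A => f.1 q.1.out, fun q => ?_,
    ((isParentMap_iff_isForest_of_commute hσ hA f.2.2).1 f.2.1).2⟩) ⟨fun f f' h => ?_, ?_⟩)
  · rw [← minimalPeriod_out]
    exact minimalPeriod_apply_dvd_of_semiconj f.2.2 _
  · refine Subtype.ext (eq_of_semiconj_of_out_eq f.2.2 f'.2.2 fun q => ?_)
    by_cases hq : q ∈ A
    · exact congrFun (congrArg Subtype.val h) ⟨q, hq⟩
    · rw [eq_root_of_notMem hq, f.2.1.map_root, f'.2.1.map_root]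
  · rintro ⟨g, hg_dvd, hg⟩
    classical
    obtain ⟨f, hf, hfg⟩ := exists_semiconj_out_eq (τ := σ)
      (fun q => if hq : q ∈ A then g ⟨q, hq⟩ else r) fun q => by
        split_ifs with hq
        · exact hg_dvd ⟨q, hq⟩
        · rw [minimalPeriod_eq_one_iff_isFixedPt.2 hσ]
          exact one_dvd _
    have f_out (q : A) : f q.1.out = g q := (hfg q).trans (dif_pos q.2)
    have f_root : f r = r := by
      have hr : of σ r ∉ A := fun h => (hA _).1 h rfl
      simpa [eq_root_of_notMem hr, hr] using hfg (of σ r)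
    refine ⟨⟨f, (isParentMap_iff_isForest_of_commute hσ hA hf).2 ⟨f_root, ?_⟩, hf⟩,
      Subtype.ext (funext f_out)⟩
    simpa only [f_out] using hg

end EquivariantParentMaps

/-! ### Counting level by level -/

section Counting

open PermCycle

variable {V : Type*} {σ : Equiv.Perm V}

theorem card_minimalPeriod_dvd [Finite V] {d : ℕ} (hd : d ≠ 0) :
    Nat.card {v // minimalPeriod σ v ∣ d} =
      d * numCycles σ d + ∑ e ∈ d.properDivisors, e * numCycles σ e := by
  rw [← Finset.sum_cons (f := fun e => e * numCycles σ e) Nat.self_notMem_properDivisors,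
    Nat.cons_self_properDivisors hd, ← card_minimalPeriod_mem]
  simp only [Nat.mem_divisors, hd, ne_eq, not_false_eq_true, and_true]

theorem card_eq_numCycles {d : ℕ} {B : Finset (PermCycle σ)} (hB : ∀ q, q ∈ B ↔ q.length = d) :
    B.card = numCycles σ d := by
  rw [numCycles, ← Nat.card_congr (Equiv.subtypeEquivRight hB), Nat.card_eq_fintype_card,
    Fintype.card_coe]

theorem card_isForest_of_length_eq [Finite V] {d : ℕ} (hd : d ≠ 0) {B : Finset (PermCycle σ)}
    (hB : ∀ q, q ∈ B ↔ q.length = d) :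
    Nat.card {g : B → V // (∀ q : B, minimalPeriod σ (g q) ∣ q.1.length) ∧ IsForest (of σ) g} =
      if numCycles σ d ≠ 0 then
        (d * numCycles σ d + ∑ e ∈ d.properDivisors, e * numCycles σ e) ^ (numCycles σ d - 1) *
          ∑ e ∈ d.properDivisors, e * numCycles σ e
      else 1 := by
  have length_eq (q : B) : q.1.length = d := (hB q).1 q.2
  have card_notMem : Nat.card {v // minimalPeriod σ v ∣ d ∧ of σ v ∉ B} =
      ∑ e ∈ d.properDivisors, e * numCycles σ e := by
    rw [← card_minimalPeriod_mem]
    refine Nat.card_congr (Equiv.subtypeEquivRight fun v => ?_)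
    rw [hB, length_of, Nat.mem_properDivisors]
    exact and_congr_right fun h => ⟨(Nat.le_of_dvd (Nat.pos_of_ne_zero hd) h).lt_of_ne, LT.lt.ne⟩
  have h := card_mul_card_forall_and_isForest (fun v => minimalPeriod σ v ∣ d) (of σ) B
  rw [card_notMem, card_minimalPeriod_dvd hd, card_eq_numCycles hB] at h
  simp only [length_eq]
  split_ifs with hpos
  · refine Nat.eq_of_mul_eq_mul_left
      (Nat.add_pos_left (Nat.mul_pos (by omega) (by omega)) _) (h.trans ?_)
    rw [← mul_assoc, mul_pow_sub_one hpos, mul_comm]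
  · obtain rfl : B = ∅ := by rw [← Finset.card_eq_zero, card_eq_numCycles hB, not_not.1 hpos]
    have : Unique {g : (∅ : Finset (PermCycle σ)) → V //
        (∀ q, minimalPeriod σ (g q) ∣ d) ∧ IsForest (of σ) g} :=
      { default := ⟨isEmptyElim, isEmptyElim, wellFounded_of_isEmpty _⟩
        uniq g := Subsingleton.elim _ _ }
    exact Nat.card_unique

theorem card_isForest_of_length_eq_one [Finite V] {r : V} (hσ : σ r = r) {B : Finset (PermCycle σ)}
    (hB : ∀ q, q ∈ B ↔ q ≠ of σ r ∧ q.length = 1) :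
    Nat.card {g : B → V // (∀ q : B, minimalPeriod σ (g q) ∣ q.1.length) ∧ IsForest (of σ) g} =
      numCycles σ 1 ^ (numCycles σ 1 - 2) := by
  classical
  have length_eq (q : B) : q.1.length = 1 := ((hB q).1 q.2).2
  have card_add_one : B.card + 1 = numCycles σ 1 := by
    rw [← Finset.card_insert_of_notMem fun h => ((hB (of σ r)).1 h).1 rfl]
    refine card_eq_numCycles fun q => ?_
    by_cases hq : q = of σ r <;> simp [hB, hq, length_of_eq_one hσ]
  have card_notMem : Nat.card {v // minimalPeriod σ v ∣ 1 ∧ of σ v ∉ B} = 1 := by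
    have eq_root_iff (v : V) : minimalPeriod σ v ∣ 1 ∧ of σ v ∉ B ↔ v = r := by
      rw [hB, Nat.dvd_one, ← length_of, ← of_eq_of_iff_of_fixed hσ]
      grind [length_of_eq_one hσ]
    rw [Nat.card_congr (Equiv.subtypeEquivRight eq_root_iff), Nat.card_unique]
  have h := card_mul_card_forall_and_isForest (fun v => minimalPeriod σ v ∣ 1) (of σ) B
  rw [card_notMem, card_minimalPeriod_dvd one_ne_zero, Nat.properDivisors_one,
    Finset.sum_empty, add_zero, one_mul, one_mul] at h
  simp only [length_eq]
  obtain hB₀ | hB₀ := B.card.eq_zero_or_pos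
  · simpa [← card_add_one, hB₀] using h
  · refine Nat.eq_of_mul_eq_mul_left (by omega) (h.trans ?_)
    rw [← pow_succ']
    congr 1
    omega

theorem card_isForest_eq_prod_length [Finite V] (A : Finset (PermCycle σ)) :
    Nat.card {g : A → V // (∀ q : A, minimalPeriod σ (g q) ∣ q.1.length) ∧ IsForest (of σ) g} =
      ∏ d ∈ Finset.Icc 1 (Nat.card V), Nat.card {g : ↥{q ∈ A | q.length = d} → V //
        (∀ q, minimalPeriod σ (g q) ∣ q.1.length) ∧ IsForest (of σ) g} :=
  card_isForest_eq_prod (of σ) A (fun q v => minimalPeriod σ v ∣ q.length) length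
    (fun q _ _ hv _ => Nat.le_of_dvd q.length_pos hv) _
    fun q _ => Finset.mem_Icc.2 ⟨q.length_pos, q.length_le_card⟩

theorem polya_tree_count_general [Finite V] (σ : Equiv.Perm V) {r : V} (hσ : σ r = r) :
    Nat.card {T : SimpleGraph V // T.IsTree ∧ ∀ v w, T.Adj v w ↔ T.Adj (σ v) (σ w)} =
      numCycles σ 1 ^ (numCycles σ 1 - 2) *
        ∏ d ∈ (Finset.Icc 2 (Nat.card V)).filter (fun d => numCycles σ d ≠ 0),
          (d * numCycles σ d + ∑ e ∈ d.properDivisors, e * numCycles σ e) ^ (numCycles σ d - 1) *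
            ∑ e ∈ d.properDivisors, e * numCycles σ e := by
  classical
  have : Nonempty V := ⟨r⟩
  have := Fintype.ofFinite (PermCycle σ)
  have mem_nonroot (q : PermCycle σ) : q ∈ Finset.univ.erase (of σ r) ↔ q ≠ of σ r := by simp
  rw [card_invariant_trees_eq_card_commute hσ, card_commute_eq_card_isForest hσ mem_nonroot,
    card_isForest_eq_prod_length, ← Finset.mul_prod_Ioc_eq_prod_Icc Nat.card_pos,
    ← Finset.Icc_add_one_left_eq_Ioc, one_add_one_eq_two, Finset.prod_filter]
  congr 1
  · exact card_isForest_of_length_eq_one hσ (by simp)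
  · refine Finset.prod_congr rfl fun d hd => ?_
    have two_le : 2 ≤ d := (Finset.mem_Icc.1 hd).1
    have length_root_ne : (of σ r).length ≠ d := by rw [length_of_eq_one hσ]; omega
    exact card_isForest_of_length_eq (by omega) (by grind)

end Counting

theorem cycleCount_eq_numCycles {n : ℕ} (σ : Equiv.Perm (Fin n)) (d : ℕ) :
    cycleCount σ d = numCycles σ d := by
  rw [cycleCount, ← Fintype.card_subtype, ← Nat.card_eq_fintype_card, card_minimalPeriod_eq]
  obtain rfl | hd := d.eq_zero_or_pos
  · simp [numCycles, (PermCycle.length_pos _).ne']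
  · exact Nat.mul_div_cancel_left _ hd

/-- The number of labeled trees on `[n]` (rooted at the vertex `1`, i.e. `0 : Fin n`)
invariant under a permutation `σ` fixing `1` equals
`λ_1 ^ (λ_1 − 2) · ∏_{d ≥ 2, λ_d ≠ 0} (d·λ_d + μ_d)^{λ_d − 1} · μ_d`. -/
theorem polya_tree_count (n : ℕ) (hn : 0 < n) (σ : Equiv.Perm (Fin n))
    (hσ : σ ⟨0, hn⟩ = ⟨0, hn⟩) :
    Nat.card {T : SimpleGraph (Fin n) //
        T.IsTree ∧ ∀ i j : Fin n, T.Adj i j ↔ T.Adj (σ i) (σ j)} =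
      cycleCount σ 1 ^ (cycleCount σ 1 - 2) *
        ∏ d ∈ (Finset.Icc 2 n).filter (fun d => cycleCount σ d ≠ 0),
          (d * cycleCount σ d + muOf σ d) ^ (cycleCount σ d - 1) * muOf σ d := by
  simpa [cycleCount_eq_numCycles, muOf] using polya_tree_count_general σ hσ
end

section
/- For every n ≥ 2, the number of labeled trees on [n] is n^{n−2} (Cayley's formula); equivalently, for every m ≥ 1, the number of pairs (T, r) with T a labeled tree on [m] and r ∈ [m] is m^{m−1}. -/
/-!
Orienting a tree with a marked root `r` towards `r` turns it into its parent map, which fixes `r`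
and sends any other vertex to its neighbour on the way to `r`. Rooted trees on `V` are thus the
self-maps of `V` with a single fixed point, into which every orbit falls; dropping the condition
that the fixed point is unique gives the rooted forests on `V`.

Following Pitman, let `P k` be the number of rooted forests on `n` vertices with `k` trees, and
count in two ways the rooted forests with `k` trees and a distinguished non-root `x`. There are
`(n - k) * P k` of them. On the other hand, cutting the edge above `x` leaves a forest with `k + 1`
trees, and the original one is recovered by grafting the tree of `x` onto any vertex `y` of the `k`
other trees; as each `y` avoids all roots but its own, there are `n * k` choices for `(x, y)`. The
recurrence `(n - k) * P k = k * n * P (k + 1)` descends from `P n = 1` to `P 1 = n ^ (n - 1)`.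
-/

open Finset Function

namespace CayleyFormula

variable {V : Type*}

section ParentMaps

/-- The vertex `w` lies on the forward orbit of `v` under `f`; if `f` is the parent map of a rooted
forest, `w` is an ancestor of `v` or `v` itself. -/
abbrev Reaches (f : V → V) : V → V → Prop := Relation.ReflTransGen fun a b => f a = b

/-- The self-map `f` is the parent map of a rooted forest, in the encoding where each root is its
own parent: every orbit ends in a fixed point. -/
def IsRootedForest (f : V → V) : Prop := ∀ v, ∃ r, IsFixedPt f r ∧ Reaches f v r

/-- The self-map `f` is the parent map of a tree rooted at `r`, with `r` as its own parent. -/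
def IsRootedTree (f : V → V) (r : V) : Prop := IsFixedPt f r ∧ ∀ v, Reaches f v r

variable {f g : V → V} {r s v w x y : V}

lemma Reaches.eq_of_isFixedPt (h : Reaches f v w) (hv : IsFixedPt f v) : w = v := by
  induction h with
  | refl => rfl
  | tail _ hbc ih => rw [← hbc, ih, hv.eq]

lemma Reaches.apply_of_ne (h : Reaches f v w) (hvw : v ≠ w) : Reaches f (f v) w := by
  obtain rfl | ⟨_, rfl, h⟩ := h.cases_head
  exacts [absurd rfl hvw, h]

lemma Reaches.eq_of_isFixedPt_of_isFixedPt (hr : Reaches f v r) (hs : Reaches f v s)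
    (hfr : IsFixedPt f r) (hfs : IsFixedPt f s) : r = s := by
  have right_unique : Relator.RightUnique fun a b => f a = b := fun _ _ _ hab hac => hab ▸ hac
  rcases Relation.ReflTransGen.total_of_right_unique right_unique hr hs with h | h
  · exact (Reaches.eq_of_isFixedPt h hfr).symm
  · exact Reaches.eq_of_isFixedPt h hfs

/-- The set of vertices that reach `x` is closed under `f`, hence contains a root. -/
lemma IsRootedForest.isFixedPt_of_reaches (hf : IsRootedForest f) (hx : Reaches f (f x) x) :
    IsFixedPt f x := by
  have reaches_back : ∀ w, Reaches f x w → Reaches f w x := by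
    intro w hxw
    induction hxw with
    | refl => exact .refl
    | @tail b _ _ hbc ih =>
      obtain rfl | hb := eq_or_ne b x
      · exact hbc ▸ hx
      · exact hbc ▸ Reaches.apply_of_ne ih hb
  obtain ⟨r, hr, hxr⟩ := hf x
  rwa [(reaches_back r hxr).eq_of_isFixedPt hr]

lemma IsRootedTree.isRootedForest (hf : IsRootedTree f r) : IsRootedForest f :=
  fun v => ⟨r, hf.1, hf.2 v⟩

lemma IsRootedTree.isFixedPt_iff (hf : IsRootedTree f r) : IsFixedPt f v ↔ v = r :=
  ⟨fun hv => (Reaches.eq_of_isFixedPt (hf.2 v) hv).symm, fun hv => hv ▸ hf.1⟩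

end ParentMaps

section Grafting

variable [DecidableEq V] {f g : V → V} {v w x y : V}

lemma Reaches.of_update (h : Reaches (update f x y) v x) : Reaches f v x := by
  induction h using Relation.ReflTransGen.head_induction_on with
  | refl => exact .refl
  | @head a _ hab _ ih =>
    obtain rfl | ha := eq_or_ne a x
    · exact .refl
    · exact .head ((update_of_ne ha _ _).symm.trans hab) ih

lemma Reaches.update_of_not_reaches (h : Reaches f v w) (hv : ¬ Reaches f v x) :
    Reaches (update f x y) v w := by
  induction h using Relation.ReflTransGen.head_induction_on with
  | refl => exact .refl
  | @head a _ hab _ ih =>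
    have ha : a ≠ x := fun ha => hv (ha ▸ .refl)
    exact .head ((update_of_ne ha _ _).trans hab) (ih fun h => hv (.head hab h))

lemma Reaches.update_self (h : Reaches f v x) : Reaches (update f x y) v x := by
  induction h using Relation.ReflTransGen.head_induction_on with
  | refl => exact .refl
  | @head a _ hab _ ih =>
    obtain rfl | ha := eq_or_ne a x
    · exact .refl
    · exact .head ((update_of_ne ha _ _).trans hab) ih

lemma IsRootedForest.exists_root_update (hf : IsRootedForest f) (hvx : ¬ Reaches f v x) (y : V) :
    ∃ r, IsFixedPt (update f x y) r ∧ Reaches (update f x y) v r := by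
  obtain ⟨r, hr, hvr⟩ := hf v
  have hrx : r ≠ x := by rintro rfl; exact hvx hvr
  exact ⟨r, (update_of_ne hrx _ _).trans hr, hvr.update_of_not_reaches hvx⟩

lemma IsRootedForest.cut (hf : IsRootedForest f) (x : V) : IsRootedForest (update f x x) := by
  intro v
  by_cases hvx : Reaches f v x
  · exact ⟨x, update_self .., hvx.update_self⟩
  · exact hf.exists_root_update hvx x

lemma IsRootedForest.graft (hg : IsRootedForest g) (hyx : ¬ Reaches g y x) :
    IsRootedForest (update g x y) := by
  intro v
  by_cases hvx : Reaches g v x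
  · obtain ⟨r, hr, hyr⟩ := hg.exists_root_update hyx y
    exact ⟨r, hr, hvx.update_self.trans (.head (update_self ..) hyr)⟩
  · exact hg.exists_root_update hvx y

end Grafting

section Counting

variable [Fintype V] [DecidableEq V] {f g : V → V} {k : ℕ} {r v x y : V}

/-- The roots of the forest with parent map `f`. -/
def roots (f : V → V) : Finset V := {v | f v = v}

@[simp] lemma mem_roots : v ∈ roots f ↔ f v = v := by simp [roots]

lemma roots_cut (f : V → V) (x : V) : roots (update f x x) = insert x (roots f) := by
  ext v
  obtain rfl | hv := eq_or_ne v x <;> simp [*]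

lemma roots_graft (hyx : y ≠ x) : roots (update g x y) = (roots g).erase x := by
  ext v
  obtain rfl | hv := eq_or_ne v x <;> simp [*]

open Classical in
variable (V k) in
/-- The parent maps of rooted forests on `V` that consist of `k` trees. -/
noncomputable def rootedForests : Finset (V → V) := {f | IsRootedForest f ∧ #(roots f) = k}

lemma mem_rootedForests : f ∈ rootedForests V k ↔ IsRootedForest f ∧ #(roots f) = k := by
  simp [rootedForests]

open Classical in
/-- The ways to join two trees of the forest `g`: the pair `⟨y, x⟩` stands for making the root `x`
a child of the vertex `y`, which must belong to a different tree. -/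
noncomputable def graftings (g : V → V) : Finset (Σ _ : V, V) :=
  univ.sigma fun y => {x ∈ roots g | ¬ Reaches g y x}

lemma mem_graftings : ⟨y, x⟩ ∈ graftings g ↔ g x = x ∧ ¬ Reaches g y x := by
  simp [graftings]

lemma card_graftings (hg : g ∈ rootedForests V (k + 1)) :
    #(graftings g) = Fintype.card V * k := by
  classical
  obtain ⟨hforest, hcard⟩ := mem_rootedForests.1 hg
  rw [graftings, card_sigma, ← card_univ]
  refine sum_const_nat fun y _ => ?_
  obtain ⟨r, hr, hyr⟩ := hforest y
  have other_roots : {x ∈ roots g | ¬ Reaches g y x} = (roots g).erase r := by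
    ext x
    simp only [mem_filter, mem_erase, mem_roots, and_comm (a := x ≠ r), and_congr_right_iff]
    refine fun hx => not_congr ⟨fun hyx => ?_, fun hxr => hxr ▸ hyr⟩
    exact hyx.eq_of_isFixedPt_of_isFixedPt hyr hx hr
  rw [other_roots, card_erase_of_mem (mem_roots.2 hr), hcard, Nat.add_sub_cancel]

lemma cut_mem (hf : f ∈ rootedForests V k) (hx : f x ≠ x) :
    update f x x ∈ rootedForests V (k + 1) ∧ ⟨f x, x⟩ ∈ graftings (update f x x) := by
  obtain ⟨hforest, hcard⟩ := mem_rootedForests.1 hf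
  refine ⟨mem_rootedForests.2 ⟨hforest.cut x, ?_⟩, mem_graftings.2 ⟨update_self .., fun h => ?_⟩⟩
  · rw [roots_cut, card_insert_of_notMem (mem_roots.not.2 hx), hcard]
  · exact hx (hforest.isFixedPt_of_reaches h.of_update)

lemma graft_mem (hg : g ∈ rootedForests V (k + 1)) (hyx : ⟨y, x⟩ ∈ graftings g) :
    update g x y ∈ rootedForests V k ∧ update g x y x ≠ x := by
  obtain ⟨hforest, hcard⟩ := mem_rootedForests.1 hg
  obtain ⟨hx, hreach⟩ := mem_graftings.1 hyx
  have hne : y ≠ x := fun h => hreach (h ▸ .refl)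
  refine ⟨mem_rootedForests.2 ⟨hforest.graft hreach, ?_⟩, by rwa [update_self]⟩
  rw [roots_graft hne, card_erase_of_mem (mem_roots.2 hx), hcard, Nat.add_sub_cancel]

lemma card_sigma_nonroots_eq_card_sigma_graftings :
    #((rootedForests V k).sigma fun f => (roots f)ᶜ) =
      #((rootedForests V (k + 1)).sigma graftings) := by
  refine card_bij' (fun p _ => ⟨update p.1 p.2 p.2, p.1 p.2, p.2⟩)
    (fun q _ => ⟨update q.1 q.2.2 q.2.1, q.2.2⟩) ?_ ?_ ?_ ?_
  · rintro ⟨f, x⟩ hp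
    simp only [mem_sigma, mem_compl, mem_roots] at hp ⊢
    exact cut_mem hp.1 hp.2
  · rintro ⟨g, y, x⟩ hq
    simp only [mem_sigma, mem_compl, mem_roots] at hq ⊢
    exact graft_mem hq.1 hq.2
  · rintro ⟨f, x⟩ -
    simp
  · rintro ⟨g, y, x⟩ hq
    have hx : g x = x := (mem_graftings.1 (mem_sigma.1 hq).2).1
    have hgx : update g x x = g := update_eq_self_iff.2 hx.symm
    simp [hgx]

lemma card_rootedForests_recurrence :
    #(rootedForests V k) * (Fintype.card V - k) =
      #(rootedForests V (k + 1)) * (Fintype.card V * k) :=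
  calc #(rootedForests V k) * (Fintype.card V - k)
    _ = #((rootedForests V k).sigma fun f => (roots f)ᶜ) := by
      rw [card_sigma, sum_const_nat fun f hf => ?_]
      rw [card_compl, (mem_rootedForests.1 hf).2]
    _ = #((rootedForests V (k + 1)).sigma graftings) :=
      card_sigma_nonroots_eq_card_sigma_graftings
    _ = #(rootedForests V (k + 1)) * (Fintype.card V * k) := by
      rw [card_sigma, sum_const_nat fun g hg => card_graftings hg]

lemma rootedForests_card : rootedForests V (Fintype.card V) = {id} := by
  ext f
  rw [mem_rootedForests, card_eq_iff_eq_univ, eq_univ_iff_forall, mem_singleton, funext_iff]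
  simp only [mem_roots, id_eq, and_iff_right_iff_imp]
  exact fun hf v => ⟨v, hf v, .refl⟩

theorem card_rootedForests {k j : ℕ} (h : k + 1 + j = Fintype.card V) :
    #(rootedForests V (k + 1)) = (k + j).choose k * Fintype.card V ^ j := by
  induction j generalizing k with
  | zero => simp [show k + 1 = Fintype.card V from h, rootedForests_card]
  | succ j ih =>
    have recurrence := card_rootedForests_recurrence (V := V) (k := k + 1)
    have hchoose := Nat.choose_succ_right_eq (k + (j + 1)) k
    rw [ih (k := k + 1) (by omega), show Fintype.card V - (k + 1) = j + 1 by omega,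
      show k + 1 + j = k + (j + 1) by omega] at recurrence
    rw [Nat.add_sub_cancel_left] at hchoose
    refine Nat.eq_of_mul_eq_mul_right j.succ_pos ?_
    calc #(rootedForests V (k + 1)) * (j + 1)
      _ = (k + (j + 1)).choose (k + 1) * (k + 1) * Fintype.card V ^ (j + 1) := by
        rw [recurrence]; ring
      _ = (k + (j + 1)).choose k * Fintype.card V ^ (j + 1) * (j + 1) := by
        rw [hchoose]; ring

lemma mem_rootedForests_one : f ∈ rootedForests V 1 ↔ ∃ r, IsRootedTree f r := by
  rw [mem_rootedForests, card_eq_one]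
  constructor
  · rintro ⟨hforest, r, hroots⟩
    have eq_root : ∀ v, f v = v ↔ v = r := by simpa [Finset.ext_iff] using hroots
    refine ⟨r, (eq_root r).2 rfl, fun v => ?_⟩
    obtain ⟨s, hs, hvs⟩ := hforest v
    exact (eq_root s).1 hs ▸ hvs
  · rintro ⟨r, hr⟩
    refine ⟨hr.isRootedForest, r, ?_⟩
    ext v
    rw [mem_roots, mem_singleton, ← hr.isFixedPt_iff, IsFixedPt]

end Counting

section Trees

variable {f g : V → V} {r v w : V} {G : SimpleGraph V}

/-- The undirected graph of a forest with parent map `f`: each vertex is joined to its parent. -/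
def parentGraph (f : V → V) : SimpleGraph V := .fromRel fun v w => f v = w

lemma parentGraph_adj : (parentGraph f).Adj v w ↔ v ≠ w ∧ (f v = w ∨ f w = v) :=
  SimpleGraph.fromRel_adj ..

lemma parentGraph_le_iff : parentGraph f ≤ G ↔ ∀ v, f v ≠ v → G.Adj v (f v) := by
  refine ⟨fun h v hv => h (parentGraph_adj.2 ⟨hv.symm, .inl rfl⟩), fun h v w hvw => ?_⟩
  obtain ⟨hne, rfl | rfl⟩ := parentGraph_adj.1 hvw
  · exact h v hne.symm
  · exact (h w hne).symm

lemma Reaches.reachable (h : Reaches f v w) : (parentGraph f).Reachable v w := by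
  induction h with
  | refl => rfl
  | @tail b c _ hbc ih =>
    obtain rfl | hne := eq_or_ne b c
    · exact ih
    · exact ih.trans (SimpleGraph.Adj.reachable (parentGraph_adj.2 ⟨hne, .inl hbc⟩))

lemma IsRootedTree.connected (hf : IsRootedTree f r) : (parentGraph f).Connected :=
  SimpleGraph.connected_iff_exists_forall_reachable _ |>.2
    ⟨r, fun v => (Reaches.reachable (hf.2 v)).symm⟩

/-- The edge from `v` to its parent is the only one that leaves the set of descendants of `v`. -/
lemma IsRootedForest.parentGraph_le_of_connected (hf : IsRootedForest f) (hG : G.Connected)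
    (hle : G ≤ parentGraph f) : parentGraph f ≤ G := by
  refine parentGraph_le_iff.2 fun v hv => ?_
  obtain ⟨p⟩ := hG.preconnected v (f v)
  obtain ⟨⟨⟨a, b⟩, hab : G.Adj a b⟩, -, hav : Reaches f a v, hbv : ¬ Reaches f b v⟩ :=
    p.exists_boundary_dart {w | Reaches f w v} .refl fun h => hv (hf.isFixedPt_of_reaches h)
  obtain ⟨-, rfl | rfl⟩ := parentGraph_adj.1 (hle hab)
  · obtain rfl | hne := eq_or_ne a v
    · exact hab
    · exact absurd (hav.apply_of_ne hne) hbv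
  · exact absurd (.head rfl hav) hbv

lemma IsRootedTree.isTree (hf : IsRootedTree f r) : (parentGraph f).IsTree :=
  SimpleGraph.isTree_of_minimal_connected
    ⟨hf.connected, fun _ hG => hf.isRootedForest.parentGraph_le_of_connected hG⟩

lemma IsRootedTree.eq_of_parentGraph_eq (hf : IsRootedTree f r) (hg : IsFixedPt g r)
    (h : parentGraph f = parentGraph g) : f = g := by
  funext v
  induction hf.2 v using Relation.ReflTransGen.head_induction_on with
  | refl => rw [hf.1, hg]
  | @head v _ hvw _ ih =>
    subst hvw
    by_cases hv : IsFixedPt f v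
    · rw [hf.isFixedPt_iff.1 hv, hf.1, hg]
    · obtain hgv | hgv := (parentGraph_adj.1 (parentGraph_le_iff.1 h.le v hv)).2
      · exact hgv.symm
      · have two_cycle : Reaches f (f v) v := .single (ih.trans hgv)
        exact absurd (hf.isRootedForest.isFixedPt_of_reaches two_cycle) hv

lemma exists_adj_dist_lt (hG : G.Connected) (hv : v ≠ r) :
    ∃ w, G.Adj v w ∧ G.dist w r < G.dist v r := by
  obtain ⟨p, hp⟩ := hG.exists_walk_length_eq_dist v r
  cases p with
  | nil => exact absurd rfl hv
  | cons hvw q =>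
    exact ⟨_, hvw, hp ▸ (SimpleGraph.dist_le q).trans_lt (by simp)⟩

lemma exists_isRootedTree_parentGraph_le (hG : G.Connected) (r : V) :
    ∃ f, IsRootedTree f r ∧ parentGraph f ≤ G := by
  classical
  choose! parent hadj hdist using fun v (hv : v ≠ r) => exists_adj_dist_lt hG hv
  let f := update parent r r
  have f_of_ne : ∀ v, v ≠ r → f v = parent v := fun v hv => update_of_ne hv _ _
  have hr : IsFixedPt f r := update_self ..
  refine ⟨f, ⟨hr, fun v => ?_⟩, parentGraph_le_iff.2 fun v hv => ?_⟩
  · induction hd : G.dist v r using Nat.strong_induction_on generalizing v with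
    | _ d ih =>
      obtain rfl | hv := eq_or_ne v r
      · exact .refl
      · exact .head (f_of_ne v hv) (ih _ (hd ▸ hdist v hv) _ rfl)
  · have hvr : v ≠ r := fun h => hv (h ▸ hr)
    exact f_of_ne v hvr ▸ hadj v hvr

lemma exists_isRootedTree_parentGraph_eq (hG : G.IsTree) (r : V) :
    ∃ f, IsRootedTree f r ∧ parentGraph f = G := by
  obtain ⟨f, hf, hle⟩ := exists_isRootedTree_parentGraph_le hG.connected r
  have hmin := SimpleGraph.isTree_iff_minimal_connected.1 hG
  exact ⟨f, hf, hle.antisymm (hmin.2 hf.connected hle)⟩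

end Trees

lemma card_trees_prod_eq_card_rootedForests [Fintype V] [DecidableEq V] :
    Nat.card ({T : SimpleGraph V // T.IsTree} × V) = #(rootedForests V 1) := by
  choose parentMap htree hgraph using
    fun p : {T : SimpleGraph V // T.IsTree} × V => exists_isRootedTree_parentGraph_eq p.1.2 p.2
  rw [← Nat.card_eq_finsetCard]
  refine Nat.card_eq_of_bijective
    (fun p => ⟨parentMap p, mem_rootedForests_one.2 ⟨p.2, htree p⟩⟩) ⟨fun p q hpq => ?_, ?_⟩
  · have hmap : parentMap p = parentMap q := congrArg Subtype.val hpq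
    have hT : p.1.1 = q.1.1 := by rw [← hgraph p, ← hgraph q, hmap]
    have hr : p.2 = q.2 := (htree q).isFixedPt_iff.1 (hmap ▸ (htree p).1)
    exact Prod.ext (Subtype.ext hT) hr
  · rintro ⟨f, hf⟩
    obtain ⟨r, hr⟩ := mem_rootedForests_one.1 hf
    let p : {T : SimpleGraph V // T.IsTree} × V := ⟨⟨parentGraph f, hr.isTree⟩, r⟩
    exact ⟨p, Subtype.ext ((htree p).eq_of_parentGraph_eq hr.1 (hgraph p))⟩

theorem card_trees_prod [Finite V] [Nonempty V] :
    Nat.card ({T : SimpleGraph V // T.IsTree} × V) = Nat.card V ^ (Nat.card V - 1) := by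
  classical
  cases nonempty_fintype V
  have hpos : 0 < Fintype.card V := Fintype.card_pos
  rw [card_trees_prod_eq_card_rootedForests,
    card_rootedForests (k := 0) (j := Fintype.card V - 1) (by omega)]
  simp

end CayleyFormula

theorem cayley_formula_general (V : Type*) [Finite V] [Nonempty V] :
    Nat.card {T : SimpleGraph V // T.IsTree} = Nat.card V ^ (Nat.card V - 2) ∧
      Nat.card ({T : SimpleGraph V // T.IsTree} × V) = Nat.card V ^ (Nat.card V - 1) := by
  have rooted := CayleyFormula.card_trees_prod (V := V)
  refine ⟨?_, rooted⟩
  rw [Nat.card_prod] at rooted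
  obtain hone | htwo : Nat.card V = 1 ∨ 2 ≤ Nat.card V := by
    have := Nat.card_pos (α := V)
    omega
  · simpa [hone] using rooted
  · rw [show Nat.card V - 1 = Nat.card V - 2 + 1 by omega, pow_succ] at rooted
    exact Nat.eq_of_mul_eq_mul_right Nat.card_pos rooted

/-- Cayley's formula: there are `n^{n−2}` labeled trees on `[n]` for `n ≥ 2`;
equivalently, there are `m^{m−1}` pairs `(T, r)` of a labeled tree on `[m]` together
with a root `r ∈ [m]`, for `m ≥ 1`. -/
theorem cayley_formula :
    (∀ n : ℕ, 2 ≤ n →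
      Nat.card {T : SimpleGraph (Fin n) // T.IsTree} = n ^ (n - 2)) ∧
    (∀ m : ℕ, 1 ≤ m →
      Nat.card ({T : SimpleGraph (Fin m) // T.IsTree} × Fin m) = m ^ (m - 1)) := by
  refine ⟨fun n hn => ?_, fun m hm => ?_⟩
  · have : Nonempty (Fin n) := ⟨⟨0, by omega⟩⟩
    simpa using (cayley_formula_general (Fin n)).1
  · have : Nonempty (Fin m) := ⟨⟨0, hm⟩⟩
    simpa only [Nat.card_fin] using (cayley_formula_general (Fin m)).2
end

section
/- For every n ≥ 2, there exists a bijection P from the set of labeled trees on [n] to the set of sequences of length n−2 with entries in [n] (Prüfer codes) such that for every labeled tree T and every vertex i ∈ [n], the degree of i in T equals 1 plus the number of indices j with P(T)_j = i. -/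
/-!
The bijection is the classical Prüfer code: remove the least leaf of the tree, record the vertex it
was attached to, and continue on the remaining vertices until only two are left.

The invariant is that the degree of every vertex exceeds its number of occurrences in the code by
one: attaching a leaf at `u` raises the degree of `u` by one, and prepending `u` to the code raises
its number of occurrences by one. In particular the leaves are exactly the vertices missing from
the code, so the code reveals which leaf was removed first. This yields injectivity by induction on
the length of the code. For surjectivity, decode the tail of a sequence to a tree on the complement
of the least missing vertex `v`, and attach `v` at the first entry.
-/

namespace PruferCode

open Finset SimpleGraph

universe u

variable {V : Type u} {v : V} {m : ℕ}

lemma card_compl_singleton {k : ℕ} (hV : Nat.card V = k + 1) (v : V) :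
    Nat.card ({v}ᶜ : Set V) = k := by
  have : Finite V := Nat.finite_of_card_ne_zero (by omega)
  rw [Nat.card_coe_set_eq, Set.ncard_compl, Set.ncard_singleton, hV, Nat.add_sub_cancel]

lemma isTree_iff_eq_top_of_card_eq_two (hV : Nat.card V = 2) {T : SimpleGraph V} :
    T.IsTree ↔ T = ⊤ := by
  have : Finite V := Nat.finite_of_card_ne_zero (by omega)
  have : Nontrivial V := Finite.one_lt_card_iff_nontrivial.1 (by omega)
  constructor
  · refine fun hT => eq_top_iff_forall_ne_adj.2 fun x y hxy => ?_
    obtain ⟨z, hxz⟩ := exists_adj_iff_not_isIsolated.2 (hT.connected.preconnected.not_isIsolated x)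
    exact ((Nat.card_eq_two_iff' x).1 hV).unique hxz.ne' hxy.symm ▸ hxz
  · rintro rfl
    exact ⟨connected_top, IsAcyclic.of_card_le_two (by simp [ENat.card_eq_coe_natCard, hV])⟩

section Least

variable [LinearOrder V]

lemma exists_isLeast_of_wellFoundedLT [WellFoundedLT V] {s : Set V} (hs : s.Nonempty) :
    ∃ v, IsLeast s v := by
  simpa only [minimal_iff_isLeast] using exists_minimal_of_wellFoundedLT (· ∈ s) hs

lemma exists_isLeast_compl_range (hV : m < Nat.card V) (c : Fin m → V) :
    ∃ v, IsLeast (Set.range c)ᶜ v := by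
  have : Finite V := Nat.finite_of_card_ne_zero (by omega)
  refine exists_isLeast_of_wellFoundedLT (Set.nonempty_compl.2 fun h => hV.not_ge ?_)
  simpa only [Nat.card_fin] using Nat.card_le_card_of_surjective c (Set.range_eq_univ.1 h)

end Least

section RemoveVertex

variable {G : SimpleGraph V}

lemma eq_of_neighborSet_eq_of_induce_eq {G' : SimpleGraph V}
    (hv : G.neighborSet v = G'.neighborSet v) (hG : G.induce {v}ᶜ = G'.induce {v}ᶜ) : G = G' := by
  have hadj : ∀ y, G.Adj v y ↔ G'.Adj v y := Set.ext_iff.1 hv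
  ext x y
  by_cases hx : x = v
  · exact hx ▸ hadj y
  by_cases hy : y = v
  · rw [adj_comm, G'.adj_comm, hy, hadj]
  · exact iff_of_eq (congrArg (fun H => H.Adj ⟨x, hx⟩ ⟨y, hy⟩) hG)

lemma card_neighborSet_eq_add_card_induce_compl_singleton (x : ({v}ᶜ : Set V))
    [Decidable (G.Adj v x)] [Finite ((G.induce {v}ᶜ).neighborSet x)] :
    Nat.card (G.neighborSet x) =
      (if G.Adj v x then 1 else 0) + Nat.card ((G.induce {v}ᶜ).neighborSet x) := by
  have himage : (↑) '' (G.induce {v}ᶜ).neighborSet x = G.neighborSet x \ {v} := by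
    ext y
    simp [and_comm]
  have hfin : (G.neighborSet x).Finite :=
    .of_sdiff (himage ▸ Set.toFinite _) (Set.finite_singleton v)
  rw [Nat.card_coe_set_eq, Nat.card_coe_set_eq, ← Set.ncard_image_of_injective _
    Subtype.val_injective, himage]
  split_ifs with hv
  · rw [add_comm, Set.ncard_sdiff_singleton_add_one ((G.mem_neighborSet _ _).2 hv.symm) hfin]
  · rw [zero_add, Set.sdiff_singleton_eq_self fun h => hv h.symm]

lemma connected_of_induce_compl_singleton (hv : ¬G.IsIsolated v)
    (hG : (G.induce {v}ᶜ).Connected) : G.Connected := by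
  obtain ⟨u, hvu⟩ := exists_adj_iff_not_isIsolated.2 hv
  have reachable_u : ∀ x, G.Reachable x u := fun x => by
    by_cases hx : x = v
    · exact hx ▸ hvu.reachable
    · exact (hG.preconnected ⟨x, hx⟩ ⟨u, hvu.ne'⟩).map (Embedding.induce _).toHom
  exact (connected_iff _).2 ⟨fun x y => (reachable_u x).trans (reachable_u y).symm, ⟨u⟩⟩

/-- A cycle through `v` would enter and leave it along the same edge. -/
lemma isAcyclic_of_induce_compl_singleton (hv : (G.neighborSet v).Subsingleton)
    (hG : (G.induce {v}ᶜ).IsAcyclic) : G.IsAcyclic := by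
  classical
  intro w c hc
  by_cases hvc : v ∈ c.support
  · have hc' := hc.rotate hvc
    exact hc'.snd_ne_penultimate
      (hv (Walk.adj_snd hc'.not_nil) (Walk.adj_penultimate hc'.not_nil).symm)
  · have hs : ∀ x ∈ c.support, x ∈ ({v}ᶜ : Set V) := fun x hx h => hvc (h ▸ hx)
    refine hG (c.induce _ hs) (Walk.IsCycle.of_map (f := (Embedding.induce _).toHom) ?_)
    rwa [Walk.map_induce]

end RemoveVertex

section Leaves

/-- The leaves of a graph, that is, its vertices of degree one. -/
def leaves (G : SimpleGraph V) : Set V := {v | Nat.card (G.neighborSet v) = 1}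

variable {G : SimpleGraph V}

lemma mem_leaves_iff : v ∈ leaves G ↔ ∃ u, G.neighborSet v = {u} := by
  rw [leaves, Set.mem_ofPred_eq, Nat.card_coe_set_eq, Set.ncard_eq_one]

lemma leaves_nonempty_of_isTree [Finite V] [Nontrivial V] (hG : G.IsTree) :
    (leaves G).Nonempty := by
  classical
  have := Fintype.ofFinite V
  obtain ⟨v, hv⟩ := hG.exists_vert_degree_one_of_nontrivial
  refine ⟨v, ?_⟩
  rwa [leaves, Set.mem_ofPred_eq, Nat.card_eq_fintype_card, card_neighborSet_eq_degree]

lemma isTree_induce_compl_singleton_iff (hv : v ∈ leaves G) :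
    (G.induce {v}ᶜ).IsTree ↔ G.IsTree := by
  obtain ⟨u, hu⟩ := mem_leaves_iff.1 hv
  constructor
  · intro h
    have hv' : ¬G.IsIsolated v := (neighborSet_nonempty G).1 (hu ▸ Set.singleton_nonempty u)
    exact ⟨connected_of_induce_compl_singleton hv' h.connected,
      isAcyclic_of_induce_compl_singleton (hu ▸ Set.subsingleton_singleton) h.isAcyclic⟩
  · intro h
    have : Finite (G.neighborSet v) := hu ▸ Set.finite_singleton u
    have := Fintype.ofFinite (G.neighborSet v)
    refine ⟨h.connected.induce_compl_singleton_of_degree_eq_one ?_, h.isAcyclic.induce _⟩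
    rwa [← card_neighborSet_eq_degree, ← Nat.card_eq_fintype_card]

end Leaves

section AttachLeaf

/-- The graph on `V` obtained from a graph on `V ∖ {v}` by joining `v` to the single vertex `u`. -/
def attachLeaf (u : ({v}ᶜ : Set V)) (G : SimpleGraph ({v}ᶜ : Set V)) : SimpleGraph V :=
  G.spanningCoe ⊔ edge v u

variable (u : ({v}ᶜ : Set V)) (G : SimpleGraph ({v}ᶜ : Set V))

lemma neighborSet_attachLeaf_self : (attachLeaf u G).neighborSet v = {(u : V)} := by
  ext x
  have hu : u.1 ≠ v := u.2
  have hne : x = u → v ≠ x := fun h => h ▸ hu.symm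
  simpa [attachLeaf, edge_adj, hu.symm] using hne

lemma induce_attachLeaf : (attachLeaf u G).induce {v}ᶜ = G := by
  ext x y
  have hx : x.1 ≠ v := x.2
  have hy : y.1 ≠ v := y.2
  simp [attachLeaf, edge_adj, hx, hy]

lemma mem_leaves_attachLeaf : v ∈ leaves (attachLeaf u G) :=
  mem_leaves_iff.2 ⟨u, neighborSet_attachLeaf_self u G⟩

lemma attachLeaf_injective2 :
    Function.Injective2 (attachLeaf : ({v}ᶜ : Set V) → SimpleGraph ({v}ᶜ : Set V) → _) := by
  intro u u' G G' h
  refine ⟨Subtype.ext (Set.singleton_injective ?_), ?_⟩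
  · rw [← neighborSet_attachLeaf_self u G, h, neighborSet_attachLeaf_self]
  · rw [← induce_attachLeaf u G, h, induce_attachLeaf]

lemma exists_attachLeaf_induce_eq {T : SimpleGraph V} (hv : v ∈ leaves T) :
    ∃ u, attachLeaf u (T.induce {v}ᶜ) = T := by
  obtain ⟨u, hu⟩ := mem_leaves_iff.1 hv
  have huv : u ≠ v := (hu.ge rfl : T.Adj v u).ne'
  exact ⟨⟨u, huv⟩, eq_of_neighborSet_eq_of_induce_eq
    ((neighborSet_attachLeaf_self _ _).trans hu.symm) (induce_attachLeaf _ _)⟩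

lemma attachLeaf_isTree {G : SimpleGraph ({v}ᶜ : Set V)} (hG : G.IsTree) :
    (attachLeaf u G).IsTree := by
  rwa [← isTree_induce_compl_singleton_iff (mem_leaves_attachLeaf u G), induce_attachLeaf]

lemma card_neighborSet_attachLeaf_coe [DecidableEq V] (x : ({v}ᶜ : Set V))
    [hfin : Finite (G.neighborSet x)] :
    Nat.card ((attachLeaf u G).neighborSet x) =
      (if u = x then 1 else 0) + Nat.card (G.neighborSet x) := by
  classical
  have hadj : (attachLeaf u G).Adj v x ↔ u = x := by
    rw [← mem_neighborSet, neighborSet_attachLeaf_self, Set.mem_singleton_iff, eq_comm,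
      Subtype.ext_iff]
  rw [← induce_attachLeaf u G] at hfin
  rw [card_neighborSet_eq_add_card_induce_compl_singleton x, induce_attachLeaf]
  simp only [hadj]

end AttachLeaf

section Prepend

/-- The sequence in `V` that starts with `u` and continues with the sequence `c` in `V ∖ {v}`. -/
def prepend (u : ({v}ᶜ : Set V)) (c : Fin m → ({v}ᶜ : Set V)) : Fin (m + 1) → V :=
  Fin.cons (α := fun _ => V) u fun j => c j

lemma prepend_injective2 :
    Function.Injective2 (prepend : ({v}ᶜ : Set V) → (Fin m → ({v}ᶜ : Set V)) → _) := by
  intro u u' c c' h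
  obtain ⟨hu, hc⟩ := Fin.cons_injective2 h
  exact ⟨Subtype.ext hu, funext fun j => Subtype.ext (congrFun hc j)⟩

lemma exists_prepend_eq {c : Fin (m + 1) → V} (hv : v ∉ Set.range c) :
    ∃ u c', prepend (v := v) u c' = c :=
  have hc : ∀ j, c j ≠ v := fun j hj => hv ⟨j, hj⟩
  ⟨⟨c 0, hc 0⟩, fun j => ⟨c j.succ, hc j.succ⟩, Fin.cons_self_tail c⟩

variable [DecidableEq V] (u : ({v}ᶜ : Set V)) (c : Fin m → ({v}ᶜ : Set V))

lemma card_prepend_eq_self : #{j | prepend u c j = v} = 0 := by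
  rw [card_filter_eq_zero_iff]
  exact fun j _ => Fin.cases u.2 (fun j => (c j).2) j

lemma card_prepend_eq_coe (x : ({v}ᶜ : Set V)) :
    #{j | prepend u c j = x} = (if u = x then 1 else 0) + #{j | c j = x} := by
  rw [Fin.card_filter_univ_succ']
  simp only [prepend, Fin.cons_zero, Fin.cons_succ, Subtype.ext_iff]

end Prepend

section DegreeCode

/-- The invariant relating a tree to its Prüfer code: every vertex has one more
neighbour in `G` than it has occurrences in `c`. -/
def IsDegreeCode [DecidableEq V] (G : SimpleGraph V) (c : Fin m → V) : Prop :=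
  ∀ x, Nat.card (G.neighborSet x) = 1 + #{j | c j = x}

variable [DecidableEq V]

lemma IsDegreeCode.leaves_eq {G : SimpleGraph V} {c : Fin m → V} (h : IsDegreeCode G c) :
    leaves G = (Set.range c)ᶜ := by
  ext x
  rw [leaves, Set.mem_ofPred_eq, h x]
  simp [filter_eq_empty_iff]

lemma IsDegreeCode.attachLeaf_prepend {G : SimpleGraph ({v}ᶜ : Set V)}
    {c : Fin m → ({v}ᶜ : Set V)} (h : IsDegreeCode G c) (u : ({v}ᶜ : Set V)) :
    IsDegreeCode (attachLeaf u G) (prepend u c) := by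
  intro x
  by_cases hx : x = v
  · subst hx
    rw [card_prepend_eq_self]
    exact mem_leaves_attachLeaf u G
  · lift x to ({v}ᶜ : Set V) using hx
    have : Finite (G.neighborSet x) := Nat.finite_of_card_ne_zero (by rw [h x]; omega)
    rw [card_neighborSet_attachLeaf_coe, card_prepend_eq_coe, h x]
    ring

end DegreeCode

section Code

/-- The labeled trees with vertex set `V`. -/
abbrev LabeledTree (V : Type u) : Type u := {T : SimpleGraph V // T.IsTree}

variable [LinearOrder V]

/-- One step of the Prüfer encoding of `T`: its least leaf, the neighbour of that leaf, and the
tree left after removing the leaf. -/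
structure LeastLeafRemoval (T : LabeledTree V) where
  leaf : V
  parent : ({leaf}ᶜ : Set V)
  rest : LabeledTree ({leaf}ᶜ : Set V)
  isLeast : IsLeast (leaves T.1) leaf
  attachLeaf_eq : attachLeaf parent rest.1 = T.1

instance (T : LabeledTree V) : Subsingleton (LeastLeafRemoval T) where
  allEq := by
    rintro ⟨v, u, R, hv, hT⟩ ⟨v', u', R', hv', hT'⟩
    obtain rfl := hv.unique hv'
    obtain ⟨rfl, hR⟩ := attachLeaf_injective2 (hT.trans hT'.symm)
    obtain rfl := Subtype.ext hR
    rfl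

lemma nonempty_leastLeafRemoval (hV : 1 < Nat.card V) (T : LabeledTree V) :
    Nonempty (LeastLeafRemoval T) := by
  have : Finite V := Nat.finite_of_card_ne_zero (by omega)
  have : Nontrivial V := Finite.one_lt_card_iff_nontrivial.1 hV
  obtain ⟨v, hv⟩ := exists_isLeast_of_wellFoundedLT (leaves_nonempty_of_isTree T.2)
  obtain ⟨u, hu⟩ := exists_attachLeaf_induce_eq hv.1
  exact ⟨v, u, ⟨_, (isTree_induce_compl_singleton_iff hv.1).2 T.2⟩, hv, hu⟩

/-- The Prüfer code of a tree on `m + 2` vertices: the neighbour of the least leaf, followed by the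
code of the tree left after removing that leaf. -/
noncomputable def pruferCode : ∀ {m : ℕ} {V : Type u} [LinearOrder V],
    Nat.card V = m + 2 → LabeledTree V → Fin m → V
  | 0, _, _, _, _ => Fin.elim0
  | _ + 1, _, _, hV, T =>
    let R := (nonempty_leastLeafRemoval (by omega) T).some
    prepend R.parent (pruferCode (card_compl_singleton hV R.leaf) R.rest)

lemma pruferCode_succ (hV : Nat.card V = m + 1 + 2) {T : LabeledTree V} (R : LeastLeafRemoval T) :
    pruferCode hV T = prepend R.parent (pruferCode (card_compl_singleton hV R.leaf) R.rest) := by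
  obtain rfl := Subsingleton.elim (nonempty_leastLeafRemoval (by omega) T).some R
  rfl

theorem isDegreeCode_pruferCode (hV : Nat.card V = m + 2) (T : LabeledTree V) :
    IsDegreeCode T.1 (pruferCode hV T) := by
  induction m generalizing V with
  | zero =>
    intro x
    rw [(isTree_iff_eq_top_of_card_eq_two hV).1 T.2, neighborSet_top, card_compl_singleton hV]
    simp
  | succ m ih =>
    obtain ⟨R⟩ := nonempty_leastLeafRemoval (by omega) T
    rw [pruferCode_succ hV R, ← R.attachLeaf_eq]
    exact (ih _ R.rest).attachLeaf_prepend R.parent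

theorem pruferCode_injective (hV : Nat.card V = m + 2) :
    Function.Injective (pruferCode hV) := by
  induction m generalizing V with
  | zero =>
    intro T T' _
    have hT := fun T : LabeledTree V => (isTree_iff_eq_top_of_card_eq_two hV).1 T.2
    exact Subtype.ext ((hT T).trans (hT T').symm)
  | succ m ih =>
    intro T T' h
    have hleaves : leaves T.1 = leaves T'.1 := by
      rw [(isDegreeCode_pruferCode hV T).leaves_eq, h, (isDegreeCode_pruferCode hV T').leaves_eq]
    obtain ⟨R⟩ := nonempty_leastLeafRemoval (by omega) T
    obtain ⟨R'⟩ := nonempty_leastLeafRemoval (by omega) T'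
    rw [pruferCode_succ hV R, pruferCode_succ hV R'] at h
    obtain ⟨v, u, R, hv, hT⟩ := R
    obtain ⟨v', u', R', hv', hT'⟩ := R'
    obtain rfl := hv.unique (hleaves ▸ hv')
    obtain ⟨hu, hR⟩ := prepend_injective2 h
    obtain rfl : u = u' := hu
    obtain rfl : R = R' := ih _ hR
    exact Subtype.ext (hT.symm.trans hT')

theorem pruferCode_surjective (hV : Nat.card V = m + 2) :
    Function.Surjective (pruferCode hV) := by
  induction m generalizing V with
  | zero =>
    exact fun c => ⟨⟨⊤, (isTree_iff_eq_top_of_card_eq_two hV).2 rfl⟩, Subsingleton.elim _ _⟩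
  | succ m ih =>
    intro c
    obtain ⟨v, hv⟩ := exists_isLeast_compl_range (by omega) c
    obtain ⟨u, c', rfl⟩ := exists_prepend_eq hv.1
    obtain ⟨R, rfl⟩ := ih (card_compl_singleton hV v) c'
    have hdeg := (isDegreeCode_pruferCode (card_compl_singleton hV v) R).attachLeaf_prepend u
    rw [← hdeg.leaves_eq] at hv
    exact ⟨_, pruferCode_succ hV ⟨v, u, R, hv, rfl⟩ (T := ⟨_, attachLeaf_isTree u R.2⟩)⟩

theorem pruferCode_bijective (hV : Nat.card V = m + 2) : Function.Bijective (pruferCode hV) :=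
  ⟨pruferCode_injective hV, pruferCode_surjective hV⟩

end Code

end PruferCode

open PruferCode in
theorem prufer_code_exists_general {V : Type*} [DecidableEq V] {m : ℕ} (hV : Nat.card V = m + 2) :
    ∃ P : {T : SimpleGraph V // T.IsTree} ≃ (Fin m → V),
      ∀ (T : {T : SimpleGraph V // T.IsTree}) (i : V),
        Nat.card (T.val.neighborSet i) =
          1 + (Finset.univ.filter fun j : Fin m => P T j = i).card := by
  classical
  let _ : LinearOrder V := linearOrderOfSTO WellOrderingRel
  refine ⟨.ofBijective _ (pruferCode_bijective hV), fun T i => ?_⟩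
  -- The occurrences on the two sides are counted with different `DecidableEq V` instances.
  convert isDegreeCode_pruferCode hV T i
  rfl

/-- There is a bijection `P` (the Prüfer code) from labeled trees on `[n]` to sequences
of length `n−2` with entries in `[n]`, such that the degree of any vertex `i` in a tree
`T` equals `1` plus the number of occurrences of `i` in `P T`. -/
theorem prufer_code_exists (n : ℕ) (hn : 2 ≤ n) :
    ∃ P : {T : SimpleGraph (Fin n) // T.IsTree} ≃ (Fin (n - 2) → Fin n),
      ∀ (T : {T : SimpleGraph (Fin n) // T.IsTree}) (i : Fin n),
        Nat.card (T.val.neighborSet i) =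
          1 + (Finset.univ.filter fun j : Fin (n - 2) => P T j = i).card :=
  prufer_code_exists_general (by rw [Nat.card_fin, Nat.sub_add_cancel hn])
end

section
/- For every n ≥ 2, the sum over all labeled trees T on [n] of the number of vertices of T of degree 1 equals n·(n−1)^{n−2}. Consequently, the expected number of leaves of a uniformly random labeled tree on [n] is n·(1 − 1/n)^{n−2}. -/
/-- The number of leaves (vertices of degree 1) of a graph on `Fin n`. -/
noncomputable def leafCount {n : ℕ} (T : SimpleGraph (Fin n)) : ℕ :=
  Nat.card {v : Fin n // Nat.card (T.neighborSet v) = 1}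

/-!
Deleting a set `S` of leaves from a tree leaves a tree on `Sᶜ` together with a map `S → Sᶜ`
recording the neighbour of each deleted leaf. As long as `Sᶜ` is nonempty this is a bijection,
because two adjacent leaves of a connected graph are its only vertices. Hence, with `t m` the
number of labeled trees on `m` vertices, `(n - k) ^ k * t (n - k)` labeled trees on `n` vertices
have all of `k < n` given vertices as leaves.

Every tree on at least two vertices has a leaf, so inclusion–exclusion over the set of leaves gives
`∑ S, (-1) ^ #S * (n - #S) ^ #S * t (n - #S) = 0` for `n ≥ 3`. If Cayley's formula
`t m = m ^ (m - 2)` is known for `m < n`, the term of every nonempty `S` is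
`(-1) ^ #S * (n - #S) ^ (n - 2)`. The sum of these terms over all `S`, including the empty one, is
the `n`-th finite difference of `x ^ (n - 2)` at `0`, which vanishes as well; so the terms at
`S = ∅` agree, that is, `t n = n ^ (n - 2)`.

Consequently each vertex is a leaf of `(n - 1) ^ (n - 2)` trees, and summing over the vertices
counts the leaves of all trees.
-/

section Leaves

variable {V W : Type*}

/-- A leaf is a vertex with exactly one neighbour. The degree is taken as a `Nat.card`, as in
`leafCount`, so that no decidability or local finiteness is involved. -/
def IsLeaf (G : SimpleGraph V) (v : V) : Prop :=
  Nat.card (G.neighborSet v) = 1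

lemma isLeaf_iff_existsUnique_adj {G : SimpleGraph V} {v : V} :
    IsLeaf G v ↔ ∃! w, G.Adj v w := by
  rw [IsLeaf, Nat.card_coe_set_eq, Set.ncard_eq_one]
  simp only [Set.eq_singleton_iff_unique_mem, SimpleGraph.mem_neighborSet, ExistsUnique]

lemma exists_isLeaf [Finite V] [Nontrivial V] {G : SimpleGraph V} (hG : G.IsTree) :
    ∃ v, IsLeaf G v := by
  classical
  have := Fintype.ofFinite V
  obtain ⟨v, hv⟩ := hG.exists_vert_degree_one_of_nontrivial
  exact ⟨v, isLeaf_iff_existsUnique_adj.2 (SimpleGraph.degree_eq_one_iff_existsUnique_adj.1 hv)⟩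

lemma isLeaf_of_card_eq_two (hV : Nat.card V = 2) {G : SimpleGraph V} (hG : G.Connected) (v : V) :
    IsLeaf G v := by
  have : Nontrivial V := (Nat.card_eq_two_iff.1 hV).elim fun x ⟨y, hxy, _⟩ => ⟨x, y, hxy⟩
  obtain ⟨w, hvw⟩ := hG.preconnected.exists_adj_of_nontrivial v
  exact isLeaf_iff_existsUnique_adj.2 ⟨w, hvw, fun y hvy =>
    ((Nat.card_eq_two_iff' v).1 hV).unique hvy.ne' hvw.ne'⟩

lemma IsLeaf.isBridge {G : SimpleGraph V} {v w : V} (hv : IsLeaf G v) (hvw : G.Adj v w) :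
    G.IsBridge s(v, w) := by
  rw [SimpleGraph.isBridge_iff]
  refine SimpleGraph.not_reachable_of_neighborSet_left_eq_empty hvw.ne ?_
  ext y
  simpa only [SimpleGraph.mem_neighborSet, SimpleGraph.deleteEdges_adj, Set.mem_singleton_iff,
    Sym2.congr_right, Set.mem_empty_iff_false, iff_false, not_and_not_right] using
    fun hvy => (isLeaf_iff_existsUnique_adj.1 hv).unique hvy hvw

lemma IsLeaf.eq_or_eq_of_adj {G : SimpleGraph V} (hG : G.Connected) {s t : V} (hs : IsLeaf G s)
    (ht : IsLeaf G t) (hst : G.Adj s t) (v : V) : v = s ∨ v = t := by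
  rw [isLeaf_iff_existsUnique_adj] at hs ht
  induction (SimpleGraph.reachable_iff_reflTransGen s v).1 (hG.preconnected s v) with
  | refl => exact .inl rfl
  | tail _ hadj ih =>
    rcases ih with rfl | rfl
    · exact .inr (hs.unique hadj hst)
    · exact .inl (ht.unique hadj hst.symm)

lemma exists_not_isLeaf (hV : 2 < Nat.card V) {G : SimpleGraph V} (hG : G.Connected) :
    ∃ v, ¬ IsLeaf G v := by
  by_contra! hleaf
  obtain ⟨s⟩ := hG.nonempty
  obtain ⟨t, hst, -⟩ := isLeaf_iff_existsUnique_adj.1 (hleaf s)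
  have huniv : (Set.univ : Set V) ⊆ {s, t} := fun v _ =>
    (hleaf s).eq_or_eq_of_adj hG (hleaf t) hst v
  have := Set.ncard_le_ncard huniv
  rw [Set.ncard_univ, Set.ncard_pair hst.ne] at this
  lia

lemma reachable_of_forall_adj_reachable {G : SimpleGraph V} {H : SimpleGraph W} (φ : V → W)
    (hφ : ∀ a b, G.Adj a b → H.Reachable (φ a) (φ b)) {a b : V} (hab : G.Reachable a b) :
    H.Reachable (φ a) (φ b) := by
  simp only [SimpleGraph.reachable_iff_reflTransGen] at hφ hab ⊢
  exact Relation.ReflTransGen.lift' φ hφ _ _ hab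

end Leaves

section AttachLeaves

variable {A W : Type*}

/-- The graph obtained from a graph `T` on `W` by attaching each `a : A` as a new leaf to the
vertex `f a` of `T`. The vertex type is a sum in order that adjacency can be defined by cases. -/
def attachLeaves (f : A → W) (T : SimpleGraph W) : SimpleGraph (A ⊕ W) where
  Adj
    | .inl _, .inl _ => False
    | .inl a, .inr w => f a = w
    | .inr w, .inl a => f a = w
    | .inr v, .inr w => T.Adj v w
  symm := ⟨by
    rintro (a | v) (b | w) h
    exacts [h, h, h, T.adj_symm h]⟩
  loopless := ⟨by
    rintro (a | v) h
    exacts [h, T.irrefl h]⟩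

namespace attachLeaves

variable {f : A → W} {T : SimpleGraph W}

@[simp] lemma not_adj_inl_inl {a b : A} : ¬ (attachLeaves f T).Adj (.inl a) (.inl b) := id

@[simp] lemma adj_inl_inr {a : A} {w : W} :
    (attachLeaves f T).Adj (.inl a) (.inr w) ↔ f a = w := .rfl

@[simp] lemma adj_inr_inl {a : A} {w : W} :
    (attachLeaves f T).Adj (.inr w) (.inl a) ↔ f a = w := .rfl

@[simp] lemma adj_inr_inr {v w : W} :
    (attachLeaves f T).Adj (.inr v) (.inr w) ↔ T.Adj v w := .rfl

lemma isLeaf_inl (a : A) : IsLeaf (attachLeaves f T) (.inl a) := by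
  simp [isLeaf_iff_existsUnique_adj, ExistsUnique]

lemma injective2 :
    Function.Injective2 (attachLeaves : (A → W) → SimpleGraph W → SimpleGraph (A ⊕ W)) := by
  intro f f' T T' h
  refine ⟨funext fun a => ?_, ?_⟩
  · have : (attachLeaves f' T').Adj (.inl a) (.inr (f a)) := h ▸ adj_inl_inr.2 rfl
    exact (adj_inl_inr.1 this).symm
  · ext v w
    rw [← adj_inr_inr (f := f), h, adj_inr_inr]

lemma reachable_inr_elim (x : A ⊕ W) :
    (attachLeaves f T).Reachable x (.inr (Sum.elim f id x)) := by
  rcases x with a | w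
  · exact SimpleGraph.Adj.reachable (adj_inl_inr.2 rfl)
  · exact .rfl

-- The retraction `Sum.elim f id` contracts the pendant edges and fixes all others.
lemma reachable_inr_inr {v w : W} :
    (attachLeaves f T).Reachable (.inr v) (.inr w) ↔ T.Reachable v w := by
  constructor
  · refine reachable_of_forall_adj_reachable (Sum.elim f id) ?_ (a := .inr v) (b := .inr w)
    rintro (a | v) (b | w) h
    · exact (not_adj_inl_inl h).elim
    · exact (adj_inl_inr.1 h) ▸ .rfl
    · exact (adj_inr_inl.1 h) ▸ .rfl
    · exact (adj_inr_inr.1 h).reachable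
  · exact reachable_of_forall_adj_reachable Sum.inr fun _ _ h => (adj_inr_inr.2 h).reachable

lemma connected_iff : (attachLeaves f T).Connected ↔ T.Connected := by
  constructor <;> intro h
  · have : Nonempty W := h.nonempty.map (Sum.elim f id)
    exact .mk fun v w => reachable_inr_inr.1 (h.preconnected (.inr v) (.inr w))
  · have : Nonempty (A ⊕ W) := h.nonempty.map .inr
    exact .mk fun x y => (reachable_inr_elim x).trans <|
      (reachable_inr_inr.2 (h.preconnected _ _)).trans (reachable_inr_elim y).symm

lemma deleteEdges_inr_inr (v w : W) :
    (attachLeaves f T).deleteEdges {s(.inr v, .inr w)} =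
      attachLeaves f (T.deleteEdges {s(v, w)}) := by
  ext (a | x) (b | y) <;> simp

lemma isBridge_inr_inr {v w : W} :
    (attachLeaves f T).IsBridge s(.inr v, .inr w) ↔ T.IsBridge s(v, w) := by
  rw [SimpleGraph.isBridge_iff, SimpleGraph.isBridge_iff, deleteEdges_inr_inr, reachable_inr_inr]

lemma isAcyclic_iff : (attachLeaves f T).IsAcyclic ↔ T.IsAcyclic := by
  simp only [SimpleGraph.isAcyclic_iff_forall_adj_isBridge]
  constructor
  · exact fun h v w hvw => isBridge_inr_inr.1 (h (adj_inr_inr.2 hvw))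
  · rintro h (a | v) (b | w) hadj
    · exact (not_adj_inl_inl hadj).elim
    · exact (isLeaf_inl a).isBridge hadj
    · exact Sym2.eq_swap ▸ (isLeaf_inl b).isBridge hadj.symm
    · exact isBridge_inr_inr.2 (h hadj)

lemma isTree_iff : (attachLeaves f T).IsTree ↔ T.IsTree := by
  rw [SimpleGraph.isTree_iff, SimpleGraph.isTree_iff, connected_iff, isAcyclic_iff]

lemma exists_eq_of_forall_isLeaf_inl [Nonempty W] {G : SimpleGraph (A ⊕ W)} (hG : G.Connected)
    (hleaf : ∀ a, IsLeaf G (.inl a)) : ∃ f T, attachLeaves f T = G := by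
  have hexists : ∀ a, ∃ w : W, G.Adj (.inl a) (.inr w) := by
    intro a
    obtain ⟨b | w, hb, -⟩ := isLeaf_iff_existsUnique_adj.1 (hleaf a)
    · obtain ⟨w⟩ := ‹Nonempty W›
      simpa using (hleaf a).eq_or_eq_of_adj hG (hleaf b) hb (.inr w)
    · exact ⟨w, hb⟩
  choose f hf using hexists
  have hadj : ∀ a x, G.Adj (.inl a) x ↔ x = .inr (f a) := fun a x =>
    ⟨fun h => (isLeaf_iff_existsUnique_adj.1 (hleaf a)).unique h (hf a), fun h => h ▸ hf a⟩
  refine ⟨f, G.comap .inr, ?_⟩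
  ext (a | v) (b | w)
  · simp [hadj]
  · simp [hadj, eq_comm]
  · simp [hadj, G.adj_comm (.inr v), eq_comm]
  · simp

end attachLeaves

end AttachLeaves

section Trees

open Finset

variable {V V' A W : Type*}

/-- The trees on `V` in which every vertex of `S` is a leaf; vertices outside `S` may be leaves
too. -/
def treesWithLeaves (S : Set V) : Set (SimpleGraph V) :=
  {G | G.IsTree ∧ ∀ v ∈ S, IsLeaf G v}

lemma treesWithLeaves_empty : treesWithLeaves (∅ : Set V) = {G | G.IsTree} := by
  simp [treesWithLeaves]

lemma treesWithLeaves_range_inl [Nonempty W] :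
    treesWithLeaves (Set.range (.inl : A → A ⊕ W)) =
      attachLeaves.uncurry '' Set.univ ×ˢ {T | T.IsTree} := by
  ext G
  constructor
  · rintro ⟨hG, hleaf⟩
    obtain ⟨f, T, rfl⟩ :=
      attachLeaves.exists_eq_of_forall_isLeaf_inl hG.connected (Set.forall_mem_range.1 hleaf)
    exact ⟨(f, T), ⟨trivial, attachLeaves.isTree_iff.1 hG⟩, rfl⟩
  · rintro ⟨⟨f, T⟩, ⟨-, hT⟩, rfl⟩
    exact ⟨attachLeaves.isTree_iff.2 hT, Set.forall_mem_range.2 attachLeaves.isLeaf_inl⟩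

lemma ncard_treesWithLeaves_range_inl [Finite A] [Nonempty W] :
    (treesWithLeaves (Set.range (.inl : A → A ⊕ W))).ncard =
      Nat.card W ^ Nat.card A * {T : SimpleGraph W | T.IsTree}.ncard := by
  rw [treesWithLeaves_range_inl, Set.ncard_image_of_injective _ attachLeaves.injective2.uncurry,
    Set.ncard_prod, Set.ncard_univ, Nat.card_fun]

lemma isLeaf_simpleGraph_iff (e : V ≃ V') {G : SimpleGraph V} {v : V} :
    IsLeaf (e.simpleGraph G) (e v) ↔ IsLeaf G v := by
  simp only [isLeaf_iff_existsUnique_adj]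
  refine (e.existsUnique_congr fun {w} => ?_).symm
  simp [Equiv.simpleGraph]

lemma ncard_treesWithLeaves_image (e : V ≃ V') (S : Set V) :
    (treesWithLeaves (e '' S)).ncard = (treesWithLeaves S).ncard := by
  have hmem : ∀ G, G ∈ treesWithLeaves S ↔ e.simpleGraph G ∈ treesWithLeaves (e '' S) := fun G =>
    and_congr (SimpleGraph.Iso.comap e.symm G).isTree_iff.symm <| by
      simp only [Set.forall_mem_image, isLeaf_simpleGraph_iff]
  rw [← Nat.card_coe_set_eq, ← Nat.card_coe_set_eq]
  exact (Nat.card_congr (e.simpleGraph.subtypeEquiv hmem)).symm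

lemma ncard_treesWithLeaves {S : Set V} (hS : S.Finite) (hcompl : Sᶜ.Nonempty) :
    (treesWithLeaves S).ncard =
      Sᶜ.ncard ^ S.ncard * {T : SimpleGraph ↥Sᶜ | T.IsTree}.ncard := by
  classical
  have := hS.to_subtype
  have := hcompl.to_subtype
  have himage : Equiv.Set.sumCompl S '' Set.range .inl = S := by
    simp [← Set.range_comp, Function.comp_def]
  rw [← Nat.card_coe_set_eq S, ← Nat.card_coe_set_eq Sᶜ, ← ncard_treesWithLeaves_range_inl,
    ← ncard_treesWithLeaves_image (Equiv.Set.sumCompl S), himage]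

lemma ncard_treesWithLeaves_of_ncard_isTree [Finite V] {S : Set V} (hS : Sᶜ.Nonempty)
    (hcompl : {T : SimpleGraph ↥Sᶜ | T.IsTree}.ncard = Sᶜ.ncard ^ (Sᶜ.ncard - 2)) :
    (treesWithLeaves S).ncard = Sᶜ.ncard ^ (Nat.card V - 2) := by
  have hpos : 0 < Sᶜ.ncard := hS.ncard_pos
  rw [ncard_treesWithLeaves S.toFinite hS, hcompl, ← pow_add, ← S.ncard_add_ncard_compl]
  rcases (show Sᶜ.ncard = 1 ∨ 2 ≤ Sᶜ.ncard by lia) with h | h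
  · simp only [h, one_pow]
  · rw [Nat.add_sub_assoc h]

lemma sum_neg_one_pow_card_mul_ncard_eq_zero {α ι : Type*} [Fintype ι] {X : Set α} (hX : X.Finite)
    {r : α → ι → Prop} (hr : ∀ x ∈ X, ∃ i, r x i) :
    ∑ S : Finset ι, (-1 : ℤ) ^ #S * {x | x ∈ X ∧ ∀ i ∈ S, r x i}.ncard = 0 := by
  classical
  lift X to Finset α using hX
  calc ∑ S : Finset ι, (-1 : ℤ) ^ #S * {x | x ∈ X ∧ ∀ i ∈ S, r x i}.ncard
      = ∑ S : Finset ι, ∑ x ∈ X with ∀ i ∈ S, r x i, (-1 : ℤ) ^ #S := by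
        refine sum_congr rfl fun S _ => ?_
        rw [← coe_filter, Set.ncard_coe_finset, sum_const, nsmul_eq_mul, mul_comm]
    _ = ∑ x ∈ X, ∑ S ∈ powerset {i | r x i}, (-1 : ℤ) ^ #S :=
        sum_comm' fun S x => by simp [subset_iff, and_comm]
    _ = 0 := by
        refine sum_eq_zero fun x hx => sum_powerset_neg_one_pow_card_of_nonempty ?_
        simpa [Finset.Nonempty] using hr x hx

lemma sum_neg_one_pow_card_mul_card_compl_pow_eq_zero {R ι : Type*} [CommRing R] [Fintype ι]
    [DecidableEq ι] {j : ℕ} (hj : j < Fintype.card ι) :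
    ∑ S : Finset ι, (-1 : R) ^ #S * (#Sᶜ : R) ^ j = 0 := by
  have hdiff := congrFun (fwdDiff_iter_pow_eq_zero_of_lt (R := R) hj) 0
  rw [fwdDiff_iter_eq_sum_shift, Pi.zero_apply] at hdiff
  calc ∑ S : Finset ι, (-1 : R) ^ #S * (#Sᶜ : R) ^ j
      = ∑ S ∈ powerset (univ : Finset ι), (-1 : R) ^ (Fintype.card ι - #S) * (#S : R) ^ j := by
        rw [powerset_univ, ← compl_bijective.sum_comp]
        simp only [card_compl, compl_compl]
    _ = ∑ k ∈ range (Fintype.card ι + 1),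
          ((-1 : ℤ) ^ (Fintype.card ι - k) * (Fintype.card ι).choose k) •
            (0 + k • (1 : R)) ^ j := by
        rw [sum_powerset_apply_card fun k => (-1 : R) ^ (Fintype.card ι - k) * (k : R) ^ j]
        simp [mul_assoc, mul_left_comm]
    _ = 0 := hdiff

lemma ncard_isTree_of_card_eq_one (hV : Nat.card V = 1) :
    {T : SimpleGraph V | T.IsTree}.ncard = 1 := by
  obtain ⟨_, _⟩ := Nat.card_eq_one_iff_unique.1 hV
  have : {T : SimpleGraph V | T.IsTree} = {⊥} :=
    Set.eq_singleton_iff_unique_mem.2 ⟨.of_subsingleton, fun _ _ => Subsingleton.elim _ _⟩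
  rw [this, Set.ncard_singleton]

lemma ncard_isTree_of_card_eq_two (hV : Nat.card V = 2) :
    {T : SimpleGraph V | T.IsTree}.ncard = 1 := by
  have : Finite V := Nat.finite_of_card_ne_zero (by lia)
  obtain ⟨v⟩ : Nonempty V := (Nat.card_pos_iff.1 (by lia)).1
  have htrees : {T : SimpleGraph V | T.IsTree} = treesWithLeaves {v} :=
    Set.ext fun T => ⟨fun hT => ⟨hT, fun w _ => isLeaf_of_card_eq_two hV hT.connected w⟩, And.left⟩
  have hcompl : ({v}ᶜ : Set V).ncard = 1 := by rw [Set.ncard_compl, Set.ncard_singleton, hV]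
  rw [htrees, ncard_treesWithLeaves (Set.toFinite _) (Set.nonempty_of_ncard_ne_zero (by lia)),
    hcompl, one_pow, one_mul, ncard_isTree_of_card_eq_one hcompl]

lemma treesWithLeaves_univ (hV : 2 < Nat.card V) : treesWithLeaves (Set.univ : Set V) = ∅ := by
  refine Set.eq_empty_of_forall_notMem ?_
  rintro T ⟨hT, hleaf⟩
  obtain ⟨v, hv⟩ := exists_not_isLeaf hV hT.connected
  exact hv (hleaf v trivial)

lemma sum_neg_one_pow_card_mul_ncard_treesWithLeaves [Fintype V] [Nontrivial V] :
    ∑ S : Finset V, (-1 : ℤ) ^ #S * (treesWithLeaves (S : Set V)).ncard = 0 :=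
  sum_neg_one_pow_card_mul_ncard_eq_zero (Set.toFinite _) fun _ hT => exists_isLeaf hT

lemma ncard_isTree_of_forall_ncard_treesWithLeaves [Finite V] [Nontrivial V]
    (hleaves : ∀ S : Set V, S.Nonempty →
      (treesWithLeaves S).ncard = Sᶜ.ncard ^ (Nat.card V - 2)) :
    {T : SimpleGraph V | T.IsTree}.ncard = Nat.card V ^ (Nat.card V - 2) := by
  classical
  have := Fintype.ofFinite V
  have hlt : Nat.card V - 2 < Fintype.card V := by
    rw [Nat.card_eq_fintype_card]
    exact Nat.sub_lt Fintype.card_pos two_pos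
  -- Both alternating sums vanish, and their terms agree for every `S ≠ ∅`, hence also for `S = ∅`.
  have hdiff := sub_eq_zero.2 <| (sum_neg_one_pow_card_mul_ncard_treesWithLeaves (V := V)).trans
    (sum_neg_one_pow_card_mul_card_compl_pow_eq_zero hlt).symm
  have hterm : ∀ S : Finset V, S ≠ ∅ →
      (-1 : ℤ) ^ #S * (treesWithLeaves (S : Set V)).ncard -
        (-1) ^ #S * (#Sᶜ : ℤ) ^ (Nat.card V - 2) = 0 := fun S hS => by
    rw [hleaves S (coe_nonempty.2 (nonempty_iff_ne_empty.2 hS)), ← coe_compl,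
      Set.ncard_coe_finset, Nat.cast_pow, sub_self]
  rw [← sum_sub_distrib, Fintype.sum_eq_single ∅ hterm, card_empty, pow_zero, one_mul, one_mul,
    sub_eq_zero, coe_empty, treesWithLeaves_empty, compl_empty, card_univ,
    ← Nat.card_eq_fintype_card] at hdiff
  exact_mod_cast hdiff

/-- Cayley's formula. For a single vertex the exponent is truncated to `0`, but the base is `1`. -/
theorem ncard_isTree [Finite V] [Nonempty V] :
    {T : SimpleGraph V | T.IsTree}.ncard = Nat.card V ^ (Nat.card V - 2) := by
  induction hn : Nat.card V using Nat.strong_induction_on generalizing V with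
  | _ n ih =>
  subst hn
  have hpos : 0 < Nat.card V := Nat.card_pos
  rcases (by lia : Nat.card V = 1 ∨ Nat.card V = 2 ∨ 2 < Nat.card V) with h1 | h2 | h3
  · simpa only [h1, one_pow] using ncard_isTree_of_card_eq_one h1
  · simpa only [h2, Nat.sub_self, pow_zero] using ncard_isTree_of_card_eq_two h2
  have : Nontrivial V := Finite.one_lt_card_iff_nontrivial.1 (by lia)
  refine ncard_isTree_of_forall_ncard_treesWithLeaves fun S hS => ?_
  rcases Sᶜ.eq_empty_or_nonempty with hcompl | hcompl
  · rw [Set.compl_empty_iff.1 hcompl, treesWithLeaves_univ h3, Set.compl_univ,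
      Set.ncard_empty, Set.ncard_empty, zero_pow (by lia)]
  · have := hcompl.to_subtype
    have hlt : Sᶜ.ncard < Nat.card V := Set.ncard_lt_card (Set.compl_ne_univ.2 hS)
    exact ncard_treesWithLeaves_of_ncard_isTree hcompl (ih _ hlt (Nat.card_coe_set_eq _))

theorem ncard_treesWithLeaves_eq_pow [Finite V] {S : Set V} (hS : Sᶜ.Nonempty) :
    (treesWithLeaves S).ncard = Sᶜ.ncard ^ (Nat.card V - 2) := by
  have := hS.to_subtype
  exact ncard_treesWithLeaves_of_ncard_isTree hS (by rw [ncard_isTree, Nat.card_coe_set_eq])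

lemma finsum_card_eq_card_mul {α β : Type*} [Finite α] [Finite β] (r : α → β → Prop) {k : ℕ}
    (hr : ∀ b, Nat.card {a // r a b} = k) : ∑ᶠ a, Nat.card {b // r a b} = Nat.card β * k := by
  classical
  have := Fintype.ofFinite α
  have := Fintype.ofFinite β
  simp only [finsum_eq_sum_of_fintype, Nat.card_eq_fintype_card, Fintype.card_subtype] at hr ⊢
  calc ∑ a, #{b | r a b} = ∑ b, #{a | r a b} :=
        sum_card_bipartiteAbove_eq_sum_card_bipartiteBelow r
    _ = Fintype.card β * k := by simp only [hr, sum_const, card_univ, smul_eq_mul]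

lemma card_isTree_isLeaf [Finite V] [Nontrivial V] (v : V) :
    Nat.card {T : {T : SimpleGraph V // T.IsTree} // IsLeaf T.val v} =
      (Nat.card V - 1) ^ (Nat.card V - 2) := by
  have e : {T : {T : SimpleGraph V // T.IsTree} // IsLeaf T.val v} ≃ treesWithLeaves {v} :=
    (Equiv.subtypeSubtypeEquivSubtypeInter _ (IsLeaf · v)).trans
      (Equiv.subtypeEquivRight fun T => by simp [treesWithLeaves])
  rw [Nat.card_congr e, Nat.card_coe_set_eq,
    ncard_treesWithLeaves_eq_pow (Set.nonempty_compl_of_nontrivial v), Set.ncard_compl,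
    Set.ncard_singleton]

theorem finsum_card_isLeaf [Finite V] [Nontrivial V] :
    ∑ᶠ T : {T : SimpleGraph V // T.IsTree}, Nat.card {v // IsLeaf T.val v} =
      Nat.card V * (Nat.card V - 1) ^ (Nat.card V - 2) :=
  finsum_card_eq_card_mul _ card_isTree_isLeaf

-- By `ncard_isTree`, the factor in front of the second sum is the probability of a single tree.
theorem sum_leaf_count_general (V : Type*) [Finite V] [Nontrivial V] :
    (∑ᶠ T : {T : SimpleGraph V // T.IsTree}, Nat.card {v // IsLeaf T.val v}) =
        Nat.card V * (Nat.card V - 1) ^ (Nat.card V - 2) ∧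
    ((Nat.card V : ℝ) ^ (Nat.card V - 2))⁻¹ *
        ∑ᶠ T : {T : SimpleGraph V // T.IsTree}, (Nat.card {v // IsLeaf T.val v} : ℝ) =
      (Nat.card V : ℝ) * (1 - 1 / (Nat.card V : ℝ)) ^ (Nat.card V - 2) := by
  refine ⟨finsum_card_isLeaf, ?_⟩
  have hcard : (Nat.card V : ℝ) ≠ 0 := Nat.cast_ne_zero.2 Nat.card_pos.ne'
  rw [← Nat.cast_finsum, finsum_card_isLeaf, one_sub_div hcard, div_pow, Nat.cast_mul, Nat.cast_pow,
    Nat.cast_pred Nat.card_pos]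
  ring

end Trees

/-- The sum over all labeled trees on `[n]` of the number of leaves equals
`n·(n−1)^{n−2}`; consequently the expected number of leaves of a uniformly random
labeled tree on `[n]` is `n·(1 − 1/n)^{n−2}`. -/
theorem sum_leaf_count (n : ℕ) (hn : 2 ≤ n) :
    (∑ᶠ T : {T : SimpleGraph (Fin n) // T.IsTree}, leafCount T.val) =
        n * (n - 1) ^ (n - 2) ∧
    ((n : ℝ) ^ (n - 2))⁻¹ *
        ∑ᶠ T : {T : SimpleGraph (Fin n) // T.IsTree}, (leafCount T.val : ℝ) =
      (n : ℝ) * (1 - 1 / (n : ℝ)) ^ (n - 2) := by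
  have : Nontrivial (Fin n) := Fin.nontrivial_iff_two_le.2 hn
  simpa only [Nat.card_fin, leafCount, IsLeaf] using sum_leaf_count_general (Fin n)
end
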